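/- arXiv:0707.2728 — 2 statements merged into one kernel-verified Lean document; each statement's English description precedes it below -/
import Mathlib

section
/- If \psi_i, \psi_j are eigenfunctions of T_a^v with eigenvalues \lambda_i, \lambda_j, orthonormal in L^2_{q,2,v} (i.e. \int_0^\infty \psi_i \psi_j t^{2v+1} d_q t = \delta_{ij}), then their restrictions to [0,a]_q satisfy \int_0^a \psi_i(x)\psi_j(x) x^{2v+1} d_q x = \lambda_i \lambda_j \delta_{ij}. -/
noncomputable def qPoch (a q : ℝ) (n : ℕ) : ℝ := ∏ i ∈ Finset.range n, (1 - a * q ^ i)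

noncomputable def qPochInf (a q : ℝ) : ℝ := ∏' i : ℕ, (1 - a * q ^ i)

/-- Normalized Hahn–Exton q-Bessel function `j_v(z, q²)` (complex argument). -/
noncomputable def jv (v q : ℝ) (z : ℂ) : ℂ :=
  ∑' n : ℕ, (-1 : ℂ) ^ n * (q : ℂ) ^ (n * (n + 1)) * z ^ (2 * n) /
    ((qPoch (q ^ 2) (q ^ 2) n : ℝ) * (qPoch (q ^ (2 * v + 2 : ℝ)) (q ^ 2) n : ℝ) : ℝ)

/-- Normalized Hahn–Exton q-Bessel function `j_v(x, q²)` (real argument). -/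
noncomputable def jvR (v q x : ℝ) : ℝ :=
  ∑' n : ℕ, (-1 : ℝ) ^ n * q ^ (n * (n + 1)) * x ^ (2 * n) /
    (qPoch (q ^ 2) (q ^ 2) n * qPoch (q ^ (2 * v + 2 : ℝ)) (q ^ 2) n)

noncomputable def cqv (q v : ℝ) : ℝ :=
  (1 / (1 - q)) * qPochInf (q ^ (2 * v + 2 : ℝ)) (q ^ 2) / qPochInf (q ^ 2) (q ^ 2)

/-- Jackson q-integral on `[0,a]`. -/
noncomputable def qInt0 (q a : ℝ) (f : ℝ → ℝ) : ℝ :=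
  (1 - q) * a * ∑' n : ℕ, q ^ n * f (a * q ^ n)

/-- Jackson q-integral on `[0,∞)`. -/
noncomputable def qIntInf (q : ℝ) (f : ℝ → ℝ) : ℝ :=
  (1 - q) * ∑' n : ℤ, q ^ n * f (q ^ n)

/-- Complex-valued Jackson q-integral on `[0,a]`. -/
noncomputable def qIntC0 (q a : ℝ) (f : ℝ → ℂ) : ℂ :=
  ((1 - q) * a : ℝ) * ∑' n : ℕ, (q ^ n : ℝ) * f (a * q ^ n)

/-- The operator `T_a^v`. -/
noncomputable def Tav (q v a : ℝ) (u : ℝ → ℝ) (x : ℝ) : ℝ :=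
  cqv q v * qInt0 q a (fun t => u t * jvR v q (x * t) * t ^ (2 * v + 1 : ℝ))

/-- The q-Bessel Fourier transform `𝓕_{q,v}`. -/
noncomputable def Fqv (q v : ℝ) (f : ℝ → ℝ) (x : ℝ) : ℝ :=
  cqv q v * qIntInf q (fun t => f t * jvR v q (x * t) * t ^ (2 * v + 1 : ℝ))

/-- Membership in `L²_{q,v,a}` (functions on `[0,a]_q`). -/
def memL2a (q v a : ℝ) (f : ℝ → ℝ) : Prop :=
  Summable (fun n : ℕ => q ^ n * (f (a * q ^ n)) ^ 2 * (a * q ^ n) ^ (2 * v + 1 : ℝ))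

/-- Membership in `L²_{q,2,v}` (even functions on `ℝ_q`, given on `ℝ_q⁺`). -/
def memL2 (q v : ℝ) (f : ℝ → ℝ) : Prop :=
  Summable (fun n : ℤ => q ^ n * (f (q ^ n)) ^ 2 * ((q : ℝ) ^ n) ^ (2 * v + 1 : ℝ))

/-- Inner product on `L²_{q,2,v}`. -/
noncomputable def qInner (q v : ℝ) (f g : ℝ → ℝ) : ℝ :=
  qIntInf q (fun t => f t * g t * t ^ (2 * v + 1 : ℝ))

/-- The kernel `k(x,y)`. -/
noncomputable def kker (q v a x y : ℝ) : ℝ :=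
  cqv q v ^ 2 * qInt0 q a (fun t => jvR v q (x * t) * jvR v q (y * t) * t ^ (2 * v + 1 : ℝ))

/-!
Write `χ` for the indicator of `[0, a]`. The operator `T_a` is the `q`-Bessel Fourier transform `𝓕`
applied to `χ u`, so that Parseval's identity for `𝓕` gives
`∫₀ᵃ φ ψ = ⟪χ φ, χ ψ⟫ = ⟪𝓕 (χ φ), 𝓕 (χ ψ)⟫ = ⟪T_a φ, T_a ψ⟫ = λ μ ⟪φ, ψ⟫`.

On the lattice `q ^ ℤ`, after absorbing the weight, `𝓕` is a summation operator with kernel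
`K (m + n)` on `ℓ²(ℤ)`, and Parseval's identity is the orthogonality relation
`∑ₖ K k * K (k + s) = δₛ`. With `p = q²`, interchanging sums in Euler's expansion
`(x; p)_∞ = ∑ₙ Aₙ xⁿ` writes `K` as the cross-correlation of two one-sided sequences: the
coefficients of `(x; p)_∞` and of its reciprocal, both rescaled. These are inverse to each other
under convolution, whence the orthogonality.
-/

open Filter Finset Set Topology
open scoped PowerSeries

section Correlation

theorem tsum_tsum_mul_tsum_comm {ι κ κ' 𝕜 : Type*} [NormedDivisionRing 𝕜] [CompleteSpace 𝕜]
    {f : ι → κ → 𝕜} {g : ι → κ' → 𝕜}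
    (h : Summable fun x : ι × κ × κ' => f x.1 x.2.1 * g x.1 x.2.2) :
    ∑' i, (∑' a, f i a) * ∑' b, g i b = ∑' x : κ × κ', ∑' i, f i x.1 * g i x.2 :=
  calc
    _ = ∑' i, ∑' x : κ × κ', f i x.1 * g i x.2 := tsum_congr fun i => by
      rw [(h.prod_factor i).tsum_prod, ← tsum_mul_right]
      simp_rw [tsum_mul_left]
    _ = _ := (Summable.tsum_comm (f := fun i (x : κ × κ') => f i x.1 * g i x.2) h).symm

variable {G 𝕜 : Type*} [AddCommGroup G] [NormedField 𝕜] {K g h α β : G → 𝕜}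

theorem summable_norm_mul_apply_add (hα : Summable fun n => ‖α n‖) (hβ : Summable fun n => ‖β n‖) :
    Summable fun x : G × G => ‖α x.2 * β (x.1 + x.2)‖ :=
  (hα.mul_norm hβ).comp_injective (i := fun x : G × G => (x.2, x.1 + x.2)) <| by
    rintro ⟨k, n⟩ ⟨k', n'⟩ hx
    simp only [Prod.mk.injEq] at hx
    obtain ⟨rfl, hk⟩ := hx
    simpa using hk

theorem summable_norm_tsum_mul_apply_add (hα : Summable fun n => ‖α n‖)
    (hβ : Summable fun n => ‖β n‖) : Summable fun k => ‖∑' n, α n * β (k + n)‖ := by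
  have hαβ := summable_norm_mul_apply_add hα hβ
  exact hαβ.prod.of_nonneg_of_le (fun _ => norm_nonneg _)
    fun k => norm_tsum_le_tsum_norm (hαβ.prod_factor k)

variable [CompleteSpace 𝕜]

theorem summable_add_mul_mul_add_mul (hK : Summable fun k => ‖K k‖)
    (hg : Summable fun n => ‖g n‖ ^ 2) (hh : Summable fun n => ‖h n‖ ^ 2) :
    Summable fun x : G × G × G => K (x.1 + x.2.1) * g x.2.1 * (K (x.1 + x.2.2) * h x.2.2) := by
  have summable_triple {c : G → 𝕜} (hc : Summable fun n => ‖c n‖ ^ 2) :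
      Summable fun x : G × G × G => ‖c x.1‖ ^ 2 * (‖K x.2.1‖ * ‖K x.2.2‖) :=
    hc.mul_of_nonneg (hK.mul_of_nonneg hK (fun _ => norm_nonneg _) fun _ => norm_nonneg _)
      (fun _ => by positivity) fun _ => by positivity
  have hgK := (summable_triple hg).comp_injective
    (i := fun x : G × G × G => (x.2.1, x.1 + x.2.1, x.1 + x.2.2)) <| by
      rintro ⟨m, n, n'⟩ ⟨m₁, n₁, n₁'⟩ hx
      simp only [Prod.mk.injEq] at hx
      obtain ⟨rfl, hm, hn'⟩ := hx
      simp_all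
  have hhK := (summable_triple hh).comp_injective
    (i := fun x : G × G × G => (x.2.2, x.1 + x.2.1, x.1 + x.2.2)) <| by
      rintro ⟨m, n, n'⟩ ⟨m₁, n₁, n₁'⟩ hx
      simp only [Prod.mk.injEq] at hx
      obtain ⟨rfl, hm, hn'⟩ := hx
      simp_all
  refine (hgK.add hhK).of_norm_bounded fun ⟨m, n, n'⟩ => ?_
  have amgm : ‖g n‖ * ‖h n'‖ ≤ ‖g n‖ ^ 2 + ‖h n'‖ ^ 2 := by
    nlinarith [two_mul_le_add_sq ‖g n‖ ‖h n'‖, norm_nonneg (g n), norm_nonneg (h n')]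
  calc
    ‖K (m + n) * g n * (K (m + n') * h n')‖
        = ‖g n‖ * ‖h n'‖ * (‖K (m + n)‖ * ‖K (m + n')‖) := by simp only [norm_mul]; ring
    _ ≤ (‖g n‖ ^ 2 + ‖h n'‖ ^ 2) * (‖K (m + n)‖ * ‖K (m + n')‖) := by gcongr
    _ = _ := add_mul _ _ _

theorem tsum_tsum_add_mul_mul_tsum_add_mul [DecidableEq G] (hK : Summable fun k => ‖K k‖)
    (horth : ∀ s, ∑' k, K k * K (k + s) = if s = 0 then 1 else 0)
    (hg : Summable fun n => ‖g n‖ ^ 2) (hh : Summable fun n => ‖h n‖ ^ 2) :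
    ∑' m, (∑' n, K (m + n) * g n) * ∑' n, K (m + n) * h n = ∑' n, g n * h n := by
  have hK_shift (n n' : G) : ∑' m, K (m + n) * K (m + n') = if n' = n then 1 else 0 := by
    rw [← (Equiv.subRight n).tsum_eq]
    simpa [sub_eq_zero, sub_add_eq_add_sub, add_sub_assoc] using horth (n' - n)
  have hinner (n n' : G) :
      ∑' m, K (m + n) * g n * (K (m + n') * h n') = if n' = n then g n * h n' else 0 := by
    simp_rw [mul_mul_mul_comm _ (g n), tsum_mul_right, hK_shift, ite_mul, one_mul, zero_mul]
  have hsupp : Function.support (fun x : G × G => if x.2 = x.1 then g x.1 * h x.2 else 0) ⊆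
      Set.range fun n => (n, n) := by
    rintro ⟨n, n'⟩ hx
    obtain rfl : n' = n := by by_contra hne; simp [hne] at hx
    exact ⟨n', rfl⟩
  have hinj : Function.Injective fun n : G => (n, n) := fun _ _ h => congrArg Prod.fst h
  rw [tsum_tsum_mul_tsum_comm (f := fun m n => K (m + n) * g n) (g := fun m n => K (m + n) * h n)
    (summable_add_mul_mul_add_mul hK hg hh)]
  simp_rw [hinner]
  rw [← Function.Injective.tsum_eq (g := fun n : G => (n, n)) hinj hsupp]
  simp only [if_true]

theorem summable_mul_apply_add_mul_mul_apply_add (hα : Summable fun n => ‖α n‖)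
    (hβ : Summable fun n => ‖β n‖) (s : G) :
    Summable fun x : G × G × G =>
      α x.2.1 * β (x.1 + x.2.1) * (α x.2.2 * β (x.1 + s + x.2.2)) := by
  have hβ_le (k : G) : ‖β k‖ ≤ ∑' n, ‖β n‖ := hβ.le_tsum k fun _ _ => norm_nonneg _
  have hpairs : Summable fun x : (G × G) × G => ‖α x.1.2 * β (x.1.1 + x.1.2)‖ * ‖α x.2‖ :=
    (summable_norm_mul_apply_add hα hβ).mul_of_nonneg hα (fun _ => norm_nonneg _)
      fun _ => norm_nonneg _
  have htriples : Summable fun x : G × G × G => ‖α x.2.1 * β (x.1 + x.2.1)‖ * ‖α x.2.2‖ :=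
    (Equiv.prodAssoc G G G).symm.summable_iff.2 hpairs
  refine (htriples.mul_right (∑' n, ‖β n‖)).of_norm_bounded fun ⟨k, n, m⟩ => ?_
  rw [norm_mul, norm_mul (α m), ← mul_assoc]
  gcongr
  exact hβ_le _

theorem tsum_correlation_mul_correlation_add [DecidableEq G] (hα : Summable fun n => ‖α n‖)
    (hβ : Summable fun n => ‖β n‖)
    (hconv : ∀ u, ∑' n, α n * β (u - n) = if u = 0 then 1 else 0) (s : G) :
    ∑' k, (∑' n, α n * β (k + n)) * ∑' n, α n * β (k + s + n) = if s = 0 then 1 else 0 := by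
  have hsum := summable_mul_apply_add_mul_mul_apply_add hα hβ s
  have hshift (k n m : G) :
      α n * β (k - (n + m) + n) * (α m * β (k - (n + m) + s + m)) =
        α n * β (k + s - n) * (α m * β (k - m)) := by
    rw [show k - (n + m) + n = k - m by abel, show k - (n + m) + s + m = k + s - n by abel]
    ring
  have hsum' : Summable fun x : G × G × G =>
      α x.2.1 * β (x.1 + s - x.2.1) * (α x.2.2 * β (x.1 - x.2.2)) := by
    simp_rw [← hshift]
    refine hsum.comp_injective (i := fun x : G × G × G => (x.1 - (x.2.1 + x.2.2), x.2)) ?_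
    rintro ⟨k, n⟩ ⟨k', n'⟩ hx
    simp only [Prod.mk.injEq] at hx
    obtain ⟨hk, rfl⟩ := hx
    simpa using hk
  calc
    _ = ∑' x : G × G, ∑' k, α x.1 * β (k + x.1) * (α x.2 * β (k + s + x.2)) :=
      tsum_tsum_mul_tsum_comm (f := fun k n => α n * β (k + n))
        (g := fun k n => α n * β (k + s + n)) hsum
    _ = ∑' x : G × G, ∑' k, α x.1 * β (k + s - x.1) * (α x.2 * β (k - x.2)) :=
      tsum_congr fun x => by
        rw [← (Equiv.subRight (x.1 + x.2)).tsum_eq]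
        exact tsum_congr fun k => hshift k x.1 x.2
    _ = ∑' k, (∑' n, α n * β (k + s - n)) * ∑' m, α m * β (k - m) :=
      (tsum_tsum_mul_tsum_comm (f := fun k n => α n * β (k + s - n))
        (g := fun k n => α n * β (k - n)) hsum').symm
    _ = if s = 0 then 1 else 0 := by
      simp_rw [hconv]
      rw [tsum_eq_single 0 fun k hk => by simp [hk]]
      simp

end Correlation

section IntExtend

variable {R : Type*}

/-- The extension by zero to `ℤ` of a sequence indexed by `ℕ`; it turns Cauchy products of sequences
into convolutions on the group `ℤ`. -/
noncomputable def intExtend [Zero R] (f : ℕ → R) : ℤ → R := Function.extend (↑) f 0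

@[simp]
theorem intExtend_natCast [Zero R] (f : ℕ → R) (n : ℕ) : intExtend f n = f n :=
  Nat.cast_injective.extend_apply f 0 n

theorem intExtend_of_neg [Zero R] (f : ℕ → R) {n : ℤ} (hn : n < 0) : intExtend f n = 0 :=
  Function.extend_apply' _ _ _ <| by rintro ⟨m, rfl⟩; omega

theorem tsum_intExtend [AddCommMonoid R] [TopologicalSpace R] (f : ℕ → R) :
    ∑' n, intExtend f n = ∑' n, f n :=
  tsum_extend_zero Nat.cast_injective f

theorem summable_norm_intExtend [NormedAddCommGroup R] {f : ℕ → R}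
    (hf : Summable fun n => ‖f n‖) : Summable fun n => ‖intExtend f n‖ := by
  refine (Nat.cast_injective.summable_iff fun n hn => ?_).1
    (by simpa only [Function.comp_def, intExtend_natCast] using hf)
  rw [intExtend, Function.extend_apply' _ _ _ hn, Pi.zero_apply, norm_zero]

theorem tsum_intExtend_mul_left [NonUnitalNonAssocSemiring R] [TopologicalSpace R]
    (f : ℕ → R) (g : ℤ → R) : ∑' n, intExtend f n * g n = ∑' n : ℕ, f n * g n := by
  rw [← tsum_intExtend]
  refine tsum_congr fun n => ?_
  rcases lt_or_ge n 0 with hn | hn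
  · simp only [intExtend_of_neg _ hn, zero_mul]
  · lift n to ℕ using hn
    simp only [intExtend_natCast]

theorem tsum_intExtend_mul_intExtend_sub [NonUnitalNonAssocSemiring R] [TopologicalSpace R]
    (f g : ℕ → R) (u : ℤ) :
    ∑' n, intExtend f n * intExtend g (u - n) =
      intExtend (fun N => ∑ x ∈ antidiagonal N, f x.1 * g x.2) u := by
  rw [tsum_intExtend_mul_left]
  rcases lt_or_ge u 0 with hu | hu
  · have hvanish (n : ℕ) : intExtend g (u - n) = 0 := intExtend_of_neg g (by omega)
    simp only [hvanish, mul_zero, tsum_zero, intExtend_of_neg _ hu]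
  · lift u to ℕ using hu
    rw [intExtend_natCast, Nat.sum_antidiagonal_eq_sum_range_succ_mk,
      tsum_eq_sum (s := range (u + 1))]
    · refine sum_congr rfl fun n hn => ?_
      rw [← Nat.cast_sub (mem_range_succ_iff.1 hn), intExtend_natCast]
    · intro n hn
      rw [mem_range_succ_iff] at hn
      rw [intExtend_of_neg g (by omega), mul_zero]

end IntExtend

section Euler

variable {p : ℝ}

theorem qPoch_succ (x p : ℝ) (n : ℕ) : qPoch x p (n + 1) = qPoch x p n * (1 - x * p ^ n) :=
  prod_range_succ _ n

theorem qPoch_ne_zero {x : ℝ} (hx : |x| < 1) (hp : |p| < 1) (n : ℕ) : qPoch x p n ≠ 0 := by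
  refine prod_ne_zero_iff.2 fun i _ => sub_ne_zero.2 fun h => ?_
  have : |x * p ^ i| < 1 := by
    rw [abs_mul, abs_pow]
    exact mul_lt_one_of_nonneg_of_lt_one_left (abs_nonneg x) hx (pow_le_one₀ (abs_nonneg p) hp.le)
  simp [← h] at this

theorem summable_norm_neg_mul_pow (x : ℝ) (hp : |p| < 1) :
    Summable fun i : ℕ => ‖-(x * p ^ i)‖ := by
  simpa only [norm_neg] using ((summable_geometric_of_abs_lt_one hp).mul_left x).norm

theorem multipliable_one_sub_mul_pow (x : ℝ) (hp : |p| < 1) :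
    Multipliable fun i : ℕ => 1 - x * p ^ i := by
  simpa only [sub_eq_add_neg] using
    multipliable_one_add_of_summable (summable_norm_neg_mul_pow x hp)

theorem qPochInf_eq_qPoch_mul (x : ℝ) (hp : |p| < 1) (N : ℕ) :
    qPochInf x p = qPoch x p N * qPochInf (p ^ N * x) p := by
  have hshift (i : ℕ) : 1 - p ^ N * x * p ^ i = 1 - x * p ^ (i + N) := by ring
  have hmul : Multipliable fun i => 1 - x * p ^ (i + N) := by
    simpa only [hshift] using multipliable_one_sub_mul_pow (p ^ N * x) hp
  calc
    qPochInf x p = qPoch x p N * ∏' i, (1 - x * p ^ (i + N)) :=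
      (hmul.prod_mul_tprod_nat_mul' (f := fun i => 1 - x * p ^ i)).symm
    _ = _ := by simp only [qPochInf, hshift]

theorem pow_ne_one_of_abs_lt_one (hp : |p| < 1) {n : ℕ} (hn : n ≠ 0) : p ^ n ≠ 1 := fun h => by
  have := pow_lt_one₀ (abs_nonneg p) hp hn
  simp [← abs_pow, h] at this

theorem qPochInf_self_ne_zero (hp : |p| < 1) : qPochInf p p ≠ 0 := by
  have hfactor (i : ℕ) : 1 + -(p * p ^ i) ≠ 0 := by
    rw [← sub_eq_add_neg, ← pow_succ']
    exact sub_ne_zero.2 (pow_ne_one_of_abs_lt_one hp i.succ_ne_zero).symm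
  simpa only [qPochInf, sub_eq_add_neg] using
    tprod_one_add_ne_zero_of_summable hfactor (summable_norm_neg_mul_pow p hp)

/-- The coefficient of `x ^ n` in the expansion of `(x; p)_∞`, that is, in `E_p(-x)` for Jackson's
second `p`-exponential `E_p`. -/
noncomputable def eulerCoeff (p : ℝ) (n : ℕ) : ℝ := (-1) ^ n * p ^ n.choose 2 / qPoch p p n

/-- The coefficient of `x ^ n` in the expansion of `1 / (x; p)_∞`, Jackson's first `p`-exponential
`e_p`. -/
noncomputable def eulerInvCoeff (p : ℝ) (n : ℕ) : ℝ := (qPoch p p n)⁻¹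

@[simp]
theorem eulerCoeff_zero (p : ℝ) : eulerCoeff p 0 = 1 := by simp [eulerCoeff, qPoch]

@[simp]
theorem eulerInvCoeff_zero (p : ℝ) : eulerInvCoeff p 0 = 1 := by simp [eulerInvCoeff, qPoch]

theorem eulerCoeff_succ (hp : |p| < 1) (n : ℕ) :
    eulerCoeff p (n + 1) = -p ^ n / (1 - p ^ (n + 1)) * eulerCoeff p n := by
  have hfactor := sub_ne_zero.2 (pow_ne_one_of_abs_lt_one hp n.succ_ne_zero).symm
  have hpoch := qPoch_ne_zero hp hp n
  rw [eulerCoeff, eulerCoeff, qPoch_succ, ← pow_succ', Nat.choose_succ_succ' n 1,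
    Nat.choose_one_right]
  field_simp
  ring

theorem eulerInvCoeff_succ (p : ℝ) (n : ℕ) :
    eulerInvCoeff p (n + 1) = (1 - p ^ (n + 1))⁻¹ * eulerInvCoeff p n := by
  rw [eulerInvCoeff, eulerInvCoeff, qPoch_succ, ← pow_succ', mul_inv_rev]

theorem eq_C_of_rescale_eq_self {R : Type*} [CommRing R] [NoZeroDivisors R] {r : R}
    (hr : ∀ n ≠ 0, r ^ n ≠ 1) {f : R⟦X⟧} (hf : PowerSeries.rescale r f = f) :
    f = PowerSeries.C (PowerSeries.constantCoeff f) := by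
  ext n
  rcases eq_or_ne n 0 with rfl | hn
  · simp
  · have hcoeff : (r ^ n - 1) * PowerSeries.coeff n f = 0 := by
      rw [sub_mul, one_mul, ← PowerSeries.coeff_rescale, hf, sub_self]
    rw [PowerSeries.coeff_C, if_neg hn]
    exact (mul_eq_zero.1 hcoeff).resolve_left (sub_ne_zero.2 (hr n hn))

theorem mk_eulerCoeff_eq_mul_rescale (hp : |p| < 1) :
    PowerSeries.mk (eulerCoeff p) =
      (1 - PowerSeries.X) * PowerSeries.rescale p (PowerSeries.mk (eulerCoeff p)) := by
  ext n
  rw [sub_mul, one_mul, map_sub]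
  rcases n with _ | n
  · simp
  · have hfactor := sub_ne_zero.2 (pow_ne_one_of_abs_lt_one hp n.succ_ne_zero).symm
    simp only [PowerSeries.coeff_succ_X_mul, PowerSeries.coeff_rescale, PowerSeries.coeff_mk,
      eulerCoeff_succ hp]
    field_simp
    ring

theorem rescale_mk_eulerInvCoeff (hp : |p| < 1) :
    PowerSeries.rescale p (PowerSeries.mk (eulerInvCoeff p)) =
      (1 - PowerSeries.X) * PowerSeries.mk (eulerInvCoeff p) := by
  ext n
  rw [sub_mul, one_mul, map_sub]
  rcases n with _ | n
  · simp
  · have hfactor := sub_ne_zero.2 (pow_ne_one_of_abs_lt_one hp n.succ_ne_zero).symm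
    simp only [PowerSeries.coeff_succ_X_mul, PowerSeries.coeff_rescale, PowerSeries.coeff_mk,
      eulerInvCoeff_succ]
    field_simp
    ring

theorem mk_eulerCoeff_mul_mk_eulerInvCoeff (hp : |p| < 1) :
    PowerSeries.mk (eulerCoeff p) * PowerSeries.mk (eulerInvCoeff p) = 1 := by
  have hinvariant : PowerSeries.rescale p
      (PowerSeries.mk (eulerCoeff p) * PowerSeries.mk (eulerInvCoeff p)) =
        PowerSeries.mk (eulerCoeff p) * PowerSeries.mk (eulerInvCoeff p) := by
    rw [map_mul, rescale_mk_eulerInvCoeff hp]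
    nth_rewrite 2 [mk_eulerCoeff_eq_mul_rescale hp]
    ring
  rw [eq_C_of_rescale_eq_self (fun _ => pow_ne_one_of_abs_lt_one hp) hinvariant]
  simp

theorem sum_antidiagonal_eulerCoeff_mul_eulerInvCoeff (hp : |p| < 1) (N : ℕ) :
    ∑ x ∈ antidiagonal N, eulerCoeff p x.1 * eulerInvCoeff p x.2 = if N = 0 then 1 else 0 := by
  simpa only [PowerSeries.coeff_mul, PowerSeries.coeff_mk, PowerSeries.coeff_one] using
    congrArg (PowerSeries.coeff N) (mk_eulerCoeff_mul_mk_eulerInvCoeff hp)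

theorem tsum_intExtend_eulerCoeff_mul_intExtend_eulerInvCoeff_sub (hp : |p| < 1) (x : ℝ) (u : ℤ) :
    ∑' n, intExtend (fun n => eulerCoeff p n * x ^ n) n *
      intExtend (fun n => eulerInvCoeff p n * x ^ n) (u - n) = if u = 0 then 1 else 0 := by
  have hcauchy (N : ℕ) : ∑ y ∈ antidiagonal N,
      eulerCoeff p y.1 * x ^ y.1 * (eulerInvCoeff p y.2 * x ^ y.2) = if N = 0 then 1 else 0 :=
    calc
      _ = (∑ y ∈ antidiagonal N, eulerCoeff p y.1 * eulerInvCoeff p y.2) * x ^ N := by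
        rw [sum_mul]
        refine sum_congr rfl fun y hy => ?_
        rw [← mem_antidiagonal.1 hy, pow_add, mul_mul_mul_comm]
      _ = _ := by
        rw [sum_antidiagonal_eulerCoeff_mul_eulerInvCoeff hp, ite_mul, one_mul, zero_mul]
        exact ite_congr rfl (fun hN => by rw [hN, pow_zero]) fun _ => rfl
  rw [tsum_intExtend_mul_intExtend_sub]
  simp only [hcauchy]
  rcases lt_or_ge u 0 with hu | hu
  · rw [intExtend_of_neg _ hu, if_neg hu.ne]
  · lift u to ℕ using hu
    simp only [intExtend_natCast, Nat.cast_eq_zero]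

theorem summable_of_tendsto_ratio {𝕜 : Type*} [NormedRing 𝕜] [CompleteSpace 𝕜] {f c : ℕ → 𝕜}
    {l : 𝕜} (hl : ‖l‖ < 1) (hc : Tendsto c atTop (𝓝 l)) (hf : ∀ n, f (n + 1) = c n * f n) :
    Summable f := by
  obtain ⟨r, hlr, hr⟩ := exists_between hl
  refine summable_of_ratio_norm_eventually_le hr ?_
  filter_upwards [hc.norm.eventually_lt_const hlr] with n hn
  rw [hf]
  exact (norm_mul_le _ _).trans (by gcongr)

theorem tendsto_one_sub_pow_succ (hp : |p| < 1) :
    Tendsto (fun n : ℕ => 1 - p ^ (n + 1)) atTop (𝓝 1) := by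
  simpa using ((tendsto_pow_atTop_nhds_zero_of_abs_lt_one hp).comp
    (tendsto_add_atTop_nat 1)).const_sub 1

theorem summable_eulerCoeff_mul_pow (hp : |p| < 1) (x : ℝ) :
    Summable fun n => eulerCoeff p n * x ^ n := by
  refine summable_of_tendsto_ratio (l := 0) (c := fun n => -p ^ n / (1 - p ^ (n + 1)) * x)
    (by simp) ?_ fun n => by rw [eulerCoeff_succ hp]; ring
  simpa using ((tendsto_pow_atTop_nhds_zero_of_abs_lt_one hp).neg.div
    (tendsto_one_sub_pow_succ hp) one_ne_zero).mul_const x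

theorem summable_eulerInvCoeff_mul_pow (hp : |p| < 1) {x : ℝ} (hx : |x| < 1) :
    Summable fun n => eulerInvCoeff p n * x ^ n := by
  refine summable_of_tendsto_ratio (l := x) (c := fun n => (1 - p ^ (n + 1))⁻¹ * x)
    hx ?_ fun n => by rw [eulerInvCoeff_succ]; ring
  simpa using ((tendsto_one_sub_pow_succ hp).inv₀ one_ne_zero).mul_const x

theorem tsum_eulerCoeff_mul_pow_eq_one_sub_mul (hp : |p| < 1) (x : ℝ) :
    ∑' n, eulerCoeff p n * x ^ n = (1 - x) * ∑' n, eulerCoeff p n * (p * x) ^ n := by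
  have hs := summable_eulerCoeff_mul_pow hp (p * x)
  have hterm (n : ℕ) : eulerCoeff p (n + 1) * x ^ (n + 1) =
      eulerCoeff p (n + 1) * (p * x) ^ (n + 1) - x * (eulerCoeff p n * (p * x) ^ n) := by
    have hfactor := sub_ne_zero.2 (pow_ne_one_of_abs_lt_one hp n.succ_ne_zero).symm
    rw [eulerCoeff_succ hp]
    field_simp
    ring
  rw [(summable_eulerCoeff_mul_pow hp x).tsum_eq_zero_add, tsum_congr hterm,
    ((summable_nat_add_iff 1).2 hs).tsum_sub (hs.mul_left x), tsum_mul_left, sub_mul, one_mul]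
  nth_rewrite 2 [hs.tsum_eq_zero_add]
  simp only [pow_zero]
  ring

theorem tsum_eulerCoeff_mul_pow_eq_qPoch_mul (hp : |p| < 1) (x : ℝ) (N : ℕ) :
    ∑' n, eulerCoeff p n * x ^ n = qPoch x p N * ∑' n, eulerCoeff p n * (p ^ N * x) ^ n := by
  induction N with
  | zero => simp [qPoch]
  | succ N ih =>
    rw [ih, qPoch_succ, tsum_eulerCoeff_mul_pow_eq_one_sub_mul hp (p ^ N * x), ← mul_assoc p,
      ← pow_succ']
    ring

theorem tendsto_tsum_eulerCoeff_mul_pow (hp : |p| < 1) (x : ℝ) :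
    Tendsto (fun N : ℕ => ∑' n, eulerCoeff p n * (p ^ N * x) ^ n) atTop (𝓝 1) := by
  have hzero : ∑' n, eulerCoeff p n * (0 : ℝ) ^ n = 1 := by
    rw [tsum_eq_single 0 fun n hn => by simp [hn]]
    simp
  rw [← hzero]
  refine tendsto_tsum_of_dominated_convergence (summable_eulerCoeff_mul_pow hp x).norm
    (fun n => ?_) (Eventually.of_forall fun N n => ?_)
  · have hx : Tendsto (fun N : ℕ => p ^ N * x) atTop (𝓝 0) := by
      simpa using (tendsto_pow_atTop_nhds_zero_of_abs_lt_one hp).mul_const x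
    exact (hx.pow n).const_mul _
  · have hle : |p| ^ N * |x| ≤ |x| :=
      mul_le_of_le_one_left (abs_nonneg x) (pow_le_one₀ (abs_nonneg p) hp.le)
    simp only [Real.norm_eq_abs, abs_mul, abs_pow]
    gcongr

theorem tsum_eulerCoeff_mul_pow (hp : |p| < 1) (x : ℝ) :
    ∑' n, eulerCoeff p n * x ^ n = qPochInf x p := by
  have hprod : Tendsto (qPoch x p) atTop (𝓝 (qPochInf x p)) :=
    (multipliable_one_sub_mul_pow x hp).tendsto_prod_tprod_nat
  have hlim := hprod.mul (tendsto_tsum_eulerCoeff_mul_pow hp x)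
  rw [mul_one] at hlim
  exact tendsto_nhds_unique
    (tendsto_const_nhds.congr (tsum_eulerCoeff_mul_pow_eq_qPoch_mul hp x)) hlim

theorem tsum_eulerCoeff_mul_qPochInf_comm (hp : |p| < 1) (w z : ℝ) :
    ∑' n, eulerCoeff p n * z ^ n * qPochInf (p ^ n * w) p =
      ∑' n, eulerCoeff p n * w ^ n * qPochInf (p ^ n * z) p := by
  have hsum : Summable fun x : ℕ × ℕ =>
      eulerCoeff p x.1 * z ^ x.1 * (eulerCoeff p x.2 * (p ^ x.1 * w) ^ x.2) := by
    refine (summable_mul_of_summable_norm (summable_eulerCoeff_mul_pow hp z).norm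
      (summable_eulerCoeff_mul_pow hp w).norm).norm.of_norm_bounded fun ⟨n, m⟩ => ?_
    have hle : |p| ^ n * |w| ≤ |w| :=
      mul_le_of_le_one_left (abs_nonneg w) (pow_le_one₀ (abs_nonneg p) hp.le)
    simp only [Real.norm_eq_abs, abs_mul, abs_pow]
    gcongr
  have hsymm (n m : ℕ) : eulerCoeff p n * z ^ n * (eulerCoeff p m * (p ^ n * w) ^ m) =
      eulerCoeff p m * w ^ m * (eulerCoeff p n * (p ^ m * z) ^ n) := by
    rw [mul_pow, mul_pow, ← pow_mul, ← pow_mul, mul_comm n m]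
    ring
  simp_rw [← tsum_eulerCoeff_mul_pow hp, ← tsum_mul_left]
  rw [← hsum.tsum_comm]
  simp_rw [hsymm]

theorem qPochInf_zpow_add_one (hp₀ : p ≠ 0) (hp : |p| < 1) (l : ℤ) :
    qPochInf (p ^ (l + 1)) p = qPochInf p p * intExtend (eulerInvCoeff p) l := by
  rcases lt_or_ge l 0 with hl | hl
  · obtain ⟨M, hM⟩ := Int.eq_ofNat_of_zero_le (show 0 ≤ -(l + 1) by omega)
    have hfactor : 1 - p ^ (l + 1) * p ^ M = 0 := by
      rw [← zpow_natCast, ← zpow_add₀ hp₀, ← hM, add_neg_cancel, zpow_zero,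
        sub_self]
    rw [intExtend_of_neg _ hl, mul_zero]
    exact tprod_of_exists_eq_zero ⟨M, hfactor⟩
  · lift l to ℕ using hl
    have hpoch := qPoch_ne_zero hp hp l
    rw [qPochInf_eq_qPoch_mul p hp l, ← pow_succ, intExtend_natCast, eulerInvCoeff,
      ← Nat.cast_add_one, zpow_natCast]
    field_simp

theorem qPochInf_div_mul_tsum_eulerCoeff_div_qPoch (hp₀ : p ≠ 0) (hp : |p| < 1) {w : ℝ}
    (hw : |w| < 1) (k : ℤ) :
    qPochInf w p / qPochInf p p * ∑' n, eulerCoeff p n * (p ^ (k + 1)) ^ n / qPoch w p n =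
      ∑' n : ℕ, eulerCoeff p n * w ^ n * intExtend (eulerInvCoeff p) (k + n) := by
  have hleft (n : ℕ) : qPochInf w p * (eulerCoeff p n * (p ^ (k + 1)) ^ n / qPoch w p n) =
      eulerCoeff p n * (p ^ (k + 1)) ^ n * qPochInf (p ^ n * w) p := by
    have hpoch := qPoch_ne_zero hw hp n
    rw [qPochInf_eq_qPoch_mul w hp n]
    field_simp
  have hright (n : ℕ) : eulerCoeff p n * w ^ n * qPochInf (p ^ n * p ^ (k + 1)) p =
      eulerCoeff p n * w ^ n * intExtend (eulerInvCoeff p) (k + n) * qPochInf p p := by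
    rw [← zpow_natCast p n, ← zpow_add₀ hp₀, show (n : ℤ) + (k + 1) = k + n + 1 by ring,
      qPochInf_zpow_add_one hp₀ hp]
    ring
  rw [div_mul_eq_mul_div, div_eq_iff (qPochInf_self_ne_zero hp), ← tsum_mul_left, ← tsum_mul_right,
    tsum_congr hleft, tsum_eulerCoeff_mul_qPochInf_comm hp, tsum_congr hright]

end Euler

section BesselKernel

variable {q v : ℝ}

/-- The matrix of the `q`-Bessel Fourier transform on `ℓ²(ℤ)`, obtained from `𝓕_{q,v}` by
restricting to the lattice `q ^ ℤ` and absorbing the square root of the weight `(1 - q) t^(2v+2)` on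
both sides: the entry in position `(m, n)` is `besselKernel q v (m + n)`. -/
noncomputable def besselKernel (q v : ℝ) (k : ℤ) : ℝ :=
  (1 - q) * cqv q v * (q ^ (v + 1)) ^ k * jvR v q (q ^ k)

theorem jvR_zpow (hq : q ≠ 0) (v : ℝ) (k : ℤ) :
    jvR v q (q ^ k) = ∑' n, eulerCoeff (q ^ 2) n * ((q ^ 2) ^ (k + 1)) ^ n /
      qPoch (q ^ (2 * v + 2)) (q ^ 2) n := by
  refine tsum_congr fun n => ?_
  have hexp : n * (n + 1) = 2 * n.choose 2 + 2 * n := by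
    rw [Nat.choose_two_right, Nat.mul_div_cancel' (Nat.even_mul_pred_self n).two_dvd]
    cases n <;> grind
  have hbase : (q ^ 2) ^ (k + 1) = q ^ 2 * (q ^ k) ^ 2 := by
    rw [zpow_add_one₀ (pow_ne_zero 2 hq), mul_comm, ← zpow_natCast q, ← zpow_natCast (q ^ k),
      ← zpow_mul, ← zpow_mul, mul_comm k]
  rw [hexp, hbase, eulerCoeff, pow_add, pow_mul q, pow_mul q, pow_mul (q ^ k), mul_pow (q ^ 2)]
  ring

theorem one_sub_mul_cqv (hq : q ≠ 1) (v : ℝ) :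
    (1 - q) * cqv q v = qPochInf (q ^ (2 * v + 2)) (q ^ 2) / qPochInf (q ^ 2) (q ^ 2) := by
  have := sub_ne_zero.2 hq.symm
  rw [cqv]
  field_simp

theorem rpow_two_mul_add_two (hq : 0 ≤ q) (v : ℝ) : q ^ (2 * v + 2) = (q ^ (v + 1)) ^ 2 := by
  rw [← Real.rpow_mul_natCast hq]
  congr 1
  push_cast
  ring

theorem abs_sq_lt_one {x : ℝ} (h₀ : 0 < x) (h₁ : x < 1) : |x ^ 2| < 1 := by
  rw [abs_of_nonneg (sq_nonneg x)]
  exact pow_lt_one₀ h₀.le h₁ two_ne_zero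

theorem rpow_add_one_lt_one (hq₀ : 0 < q) (hq₁ : q < 1) (hv : -1 < v) : q ^ (v + 1) < 1 :=
  Real.rpow_lt_one hq₀.le hq₁ (by linarith)

theorem besselKernel_eq_correlation (hq₀ : 0 < q) (hq₁ : q < 1) (hv : -1 < v) (k : ℤ) :
    besselKernel q v k =
      ∑' n, intExtend (fun n => eulerCoeff (q ^ 2) n * (q ^ (v + 1)) ^ n) n *
        intExtend (fun n => eulerInvCoeff (q ^ 2) n * (q ^ (v + 1)) ^ n) (k + n) := by
  set s := q ^ (v + 1) with hs
  have hs₀ : 0 < s := Real.rpow_pos_of_pos hq₀ _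
  have hrescale (l : ℤ) : intExtend (fun n => eulerInvCoeff (q ^ 2) n * s ^ n) l =
      intExtend (eulerInvCoeff (q ^ 2)) l * s ^ l := by
    rcases lt_or_ge l 0 with hl | hl
    · simp only [intExtend_of_neg _ hl, zero_mul]
    · lift l to ℕ using hl
      simp only [intExtend_natCast, zpow_natCast]
  have hs₁ : s < 1 := rpow_add_one_lt_one hq₀ hq₁ hv
  rw [besselKernel, one_sub_mul_cqv hq₁.ne, jvR_zpow hq₀.ne', mul_right_comm,
    rpow_two_mul_add_two hq₀.le, ← hs, qPochInf_div_mul_tsum_eulerCoeff_div_qPoch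
      (pow_ne_zero 2 hq₀.ne') (abs_sq_lt_one hq₀ hq₁) (abs_sq_lt_one hs₀ hs₁),
    tsum_intExtend_mul_left, ← tsum_mul_right]
  refine tsum_congr fun n => ?_
  rw [hrescale, zpow_add₀ hs₀.ne', zpow_natCast]
  ring

theorem summable_norm_intExtend_eulerCoeff_mul_pow (hq₀ : 0 < q) (hq₁ : q < 1) (x : ℝ) :
    Summable fun n => ‖intExtend (fun n => eulerCoeff (q ^ 2) n * x ^ n) n‖ :=
  summable_norm_intExtend (summable_eulerCoeff_mul_pow (abs_sq_lt_one hq₀ hq₁) x).norm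

theorem summable_norm_intExtend_eulerInvCoeff_mul_rpow_pow (hq₀ : 0 < q) (hq₁ : q < 1)
    (hv : -1 < v) :
    Summable fun n => ‖intExtend (fun n => eulerInvCoeff (q ^ 2) n * (q ^ (v + 1)) ^ n) n‖ := by
  refine summable_norm_intExtend (summable_eulerInvCoeff_mul_pow (abs_sq_lt_one hq₀ hq₁) ?_).norm
  rw [abs_of_pos (Real.rpow_pos_of_pos hq₀ _)]
  exact rpow_add_one_lt_one hq₀ hq₁ hv

theorem summable_norm_besselKernel (hq₀ : 0 < q) (hq₁ : q < 1) (hv : -1 < v) :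
    Summable fun k => ‖besselKernel q v k‖ := by
  simp only [besselKernel_eq_correlation hq₀ hq₁ hv]
  exact summable_norm_tsum_mul_apply_add (summable_norm_intExtend_eulerCoeff_mul_pow hq₀ hq₁ _)
    (summable_norm_intExtend_eulerInvCoeff_mul_rpow_pow hq₀ hq₁ hv)

theorem tsum_besselKernel_mul_besselKernel_add (hq₀ : 0 < q) (hq₁ : q < 1) (hv : -1 < v) (s : ℤ) :
    ∑' k, besselKernel q v k * besselKernel q v (k + s) = if s = 0 then 1 else 0 := by
  simp only [besselKernel_eq_correlation hq₀ hq₁ hv]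
  exact tsum_correlation_mul_correlation_add
    (summable_norm_intExtend_eulerCoeff_mul_pow hq₀ hq₁ _)
    (summable_norm_intExtend_eulerInvCoeff_mul_rpow_pow hq₀ hq₁ hv)
    (tsum_intExtend_eulerCoeff_mul_intExtend_eulerInvCoeff_sub (abs_sq_lt_one hq₀ hq₁) _) s

end BesselKernel

section Jackson

variable {q v : ℝ}

/-- The sequence in `ℓ²(ℤ)` representing `f ∈ L²_{q,2,v}`: the values of `f` on the lattice `q ^ ℤ`
times the square root of the weight `t^(2v+2)`. The constant `1 - q` of the Jackson integral is left
out, so this is an isometry up to that factor. -/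
noncomputable def latticeSeq (q v : ℝ) (f : ℝ → ℝ) (n : ℤ) : ℝ := (q ^ (v + 1)) ^ n * f (q ^ n)

theorem zpow_mul_zpow_rpow (hq : 0 < q) (v : ℝ) (n : ℤ) :
    q ^ n * (q ^ n) ^ (2 * v + 1) = ((q ^ (v + 1)) ^ n) ^ 2 := by
  rw [← Real.rpow_intCast, ← Real.rpow_intCast, ← Real.rpow_natCast, ← Real.rpow_mul hq.le,
    ← Real.rpow_add hq, ← Real.rpow_mul hq.le, ← Real.rpow_mul hq.le]
  congr 1
  push_cast
  ring

theorem qInner_eq_tsum_latticeSeq (hq : 0 < q) (v : ℝ) (f g : ℝ → ℝ) :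
    qInner q v f g = (1 - q) * ∑' n, latticeSeq q v f n * latticeSeq q v g n := by
  refine congrArg _ (tsum_congr fun n => ?_)
  rw [latticeSeq, latticeSeq]
  linear_combination (f (q ^ n) * g (q ^ n)) * zpow_mul_zpow_rpow hq v n

theorem memL2_iff_summable_latticeSeq (hq : 0 < q) {f : ℝ → ℝ} :
    memL2 q v f ↔ Summable fun n => ‖latticeSeq q v f n‖ ^ 2 := by
  refine summable_congr fun n => ?_
  rw [latticeSeq, Real.norm_eq_abs, sq_abs]
  linear_combination f (q ^ n) ^ 2 * zpow_mul_zpow_rpow hq v n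

theorem memL2.indicator (hq : 0 < q) {f : ℝ → ℝ} (hf : memL2 q v f) (S : Set ℝ) :
    memL2 q v (S.indicator f) := by
  rw [memL2_iff_summable_latticeSeq hq] at hf ⊢
  refine hf.of_nonneg_of_le (fun _ => by positivity) fun n => ?_
  simp only [latticeSeq, norm_mul]
  gcongr
  exact norm_indicator_le_norm_self f _

theorem latticeSeq_Fqv (hq : 0 < q) (v : ℝ) (f : ℝ → ℝ) (m : ℤ) :
    latticeSeq q v (Fqv q v f) m = ∑' n, besselKernel q v (m + n) * latticeSeq q v f n := by
  have hs : q ^ (v + 1) ≠ 0 := (Real.rpow_pos_of_pos hq _).ne'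
  simp only [latticeSeq, Fqv, qIntInf, ← tsum_mul_left]
  refine tsum_congr fun n => ?_
  rw [besselKernel, zpow_add₀ hs, zpow_add₀ hq.ne']
  linear_combination ((q ^ (v + 1)) ^ m * cqv q v * (1 - q) * f (q ^ n) *
    jvR v q (q ^ m * q ^ n)) * zpow_mul_zpow_rpow hq v n

theorem qInner_Fqv_Fqv (hq₀ : 0 < q) (hq₁ : q < 1) (hv : -1 < v) {f g : ℝ → ℝ}
    (hf : memL2 q v f) (hg : memL2 q v g) :
    qInner q v (Fqv q v f) (Fqv q v g) = qInner q v f g := by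
  rw [memL2_iff_summable_latticeSeq hq₀] at hf hg
  simp only [qInner_eq_tsum_latticeSeq hq₀, latticeSeq_Fqv hq₀]
  rw [tsum_tsum_add_mul_mul_tsum_add_mul (summable_norm_besselKernel hq₀ hq₁ hv)
    (tsum_besselKernel_mul_besselKernel_add hq₀ hq₁ hv) hf hg]

theorem qInt0_zpow_eq_qIntInf_indicator (hq₀ : 0 < q) (hq₁ : q < 1) (n₀ : ℤ) (f : ℝ → ℝ) :
    qInt0 q (q ^ n₀) f = qIntInf q ((Set.Iic (q ^ n₀)).indicator f) := by
  have hle (n : ℤ) : q ^ (n + n₀) ≤ q ^ n₀ ↔ 0 ≤ n := by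
    rw [zpow_le_zpow_iff_right_of_lt_one₀ hq₀ hq₁, le_add_iff_nonneg_left]
  have hterm (n : ℤ) : q ^ (n + n₀) * (Set.Iic (q ^ n₀)).indicator f (q ^ (n + n₀)) =
      intExtend (fun n => q ^ n₀ * (q ^ n * f (q ^ n₀ * q ^ n))) n := by
    rcases lt_or_ge n 0 with hn | hn
    · rw [intExtend_of_neg _ hn, Set.indicator_of_notMem (by simpa [hle] using hn), mul_zero]
    · rw [Set.indicator_of_mem (Set.mem_Iic.2 ((hle n).2 hn))]
      lift n to ℕ using hn
      rw [intExtend_natCast, add_comm, zpow_add₀ hq₀.ne', zpow_natCast, mul_assoc]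
  rw [qInt0, qIntInf, ← (Equiv.addRight n₀).tsum_eq]
  simp only [Equiv.coe_addRight, hterm]
  rw [tsum_intExtend, tsum_mul_left, mul_assoc]

theorem qInt0_zpow_mul_eq_qInner_indicator (hq₀ : 0 < q) (hq₁ : q < 1) (v : ℝ) (n₀ : ℤ)
    (f g : ℝ → ℝ) :
    qInt0 q (q ^ n₀) (fun x => f x * g x * x ^ (2 * v + 1)) =
      qInner q v ((Set.Iic (q ^ n₀)).indicator f) ((Set.Iic (q ^ n₀)).indicator g) := by
  rw [qInt0_zpow_eq_qIntInf_indicator hq₀ hq₁, qInner]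
  congr 1
  funext x
  by_cases hx : x ≤ q ^ n₀ <;> simp [hx]

theorem Tav_zpow_eq_Fqv_indicator (hq₀ : 0 < q) (hq₁ : q < 1) (v : ℝ) (n₀ : ℤ) (u : ℝ → ℝ) :
    Tav q v (q ^ n₀) u = Fqv q v ((Set.Iic (q ^ n₀)).indicator u) := by
  funext x
  rw [Tav, Fqv, qInt0_zpow_eq_qIntInf_indicator hq₀ hq₁]
  congr 2
  funext t
  by_cases ht : t ≤ q ^ n₀ <;> simp [ht]

theorem qInner_eq_mul_of_zpow_eq_mul {f g φ ψ : ℝ → ℝ} {c d : ℝ}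
    (hf : ∀ m : ℤ, f (q ^ m) = c * φ (q ^ m)) (hg : ∀ m : ℤ, g (q ^ m) = d * ψ (q ^ m)) (v : ℝ) :
    qInner q v f g = c * d * qInner q v φ ψ := by
  simp only [qInner, qIntInf, ← tsum_mul_left]
  refine tsum_congr fun m => ?_
  rw [hf, hg]
  ring

end Jackson

theorem eigenfunctions_discrete_orthogonality_general {q v : ℝ} (hq₀ : 0 < q) (hq₁ : q < 1)
    (hv : -1 < v) (n₀ : ℤ) {φ ψ : ℝ → ℝ} {lam mu : ℝ} (hφ : memL2 q v φ) (hψ : memL2 q v ψ)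
    (heigφ : ∀ m : ℤ, Tav q v (q ^ n₀) φ (q ^ m) = lam * φ (q ^ m))
    (heigψ : ∀ m : ℤ, Tav q v (q ^ n₀) ψ (q ^ m) = mu * ψ (q ^ m)) :
    qInt0 q (q ^ n₀) (fun x => φ x * ψ x * x ^ (2 * v + 1)) = lam * mu * qInner q v φ ψ := by
  let χ (f : ℝ → ℝ) : ℝ → ℝ := (Set.Iic (q ^ n₀)).indicator f
  calc
    _ = qInner q v (χ φ) (χ ψ) := qInt0_zpow_mul_eq_qInner_indicator hq₀ hq₁ v n₀ φ ψ
    _ = qInner q v (Fqv q v (χ φ)) (Fqv q v (χ ψ)) :=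
      (qInner_Fqv_Fqv hq₀ hq₁ hv (hφ.indicator hq₀ _) (hψ.indicator hq₀ _)).symm
    _ = qInner q v (Tav q v (q ^ n₀) φ) (Tav q v (q ^ n₀) ψ) := by
      simp only [χ, Tav_zpow_eq_Fqv_indicator hq₀ hq₁]
    _ = lam * mu * qInner q v φ ψ := qInner_eq_mul_of_zpow_eq_mul heigφ heigψ v

/-- discrete orthogonality of the eigenfunctions on `[0,a]_q`. -/
theorem eigenfunctions_discrete_orthogonality (q v : ℝ) (hq0 : 0 < q) (hq1 : q < 1)
    (hv : -1 < v) (n₀ : ℤ) (a : ℝ) (ha : a = (q : ℝ) ^ n₀)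
    (ψ : ℕ → ℝ → ℝ) (lam : ℕ → ℝ)
    (hmem : ∀ i, memL2 q v (ψ i))
    (heig : ∀ i, ∀ m : ℤ, Tav q v a (ψ i) ((q : ℝ) ^ m) = lam i * ψ i ((q : ℝ) ^ m))
    (horth : ∀ i j, qInner q v (ψ i) (ψ j) = if i = j then 1 else 0) :
    ∀ i j, qInt0 q a (fun x => ψ i x * ψ j x * x ^ (2 * v + 1 : ℝ)) =
      lam i * lam j * (if i = j then 1 else 0) := by
  intro i j
  subst ha
  rw [eigenfunctions_discrete_orthogonality_general hq0 hq1 hv n₀ (hmem i) (hmem j) (heig i)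
    (heig j), horth]
end

section
/- q-sampling theorem: for any f \in PW_{q,a}^v (extended analytically to \mathbb{C}), f(z) = (1-q)\sum_{k\in\mathbb{Z}} q^{2k(v+1)} f(q^k) k_z(q^k) for all z \in \mathbb{C}, where k_z(y) = c_{q,v}^2\int_0^a j_v(zt,q^2)j_v(yt,q^2)t^{2v+1}d_qt. -/
/-- The kernel `k_z(y)` with complex `z`. -/
noncomputable def kkerC (q v a : ℝ) (z : ℂ) (y : ℝ) : ℂ :=
  ((cqv q v ^ 2 : ℝ) : ℂ) *
    qIntC0 q a (fun t => jv v q (z * t) * ((jvR v q (y * t) * t ^ (2 * v + 1 : ℝ) : ℝ) : ℂ))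

/-- The analytic extension to ℂ of an element of `PW_{q,a}^v` with density `u ∈ L²_{q,v,a}`. -/
noncomputable def pwExt (q v a : ℝ) (u : ℝ → ℝ) (z : ℂ) : ℂ :=
  ((cqv q v : ℝ) : ℂ) *
    qIntC0 q a (fun t => ((u t * t ^ (2 * v + 1 : ℝ) : ℝ) : ℂ) * jv v q (z * t))

/-!
Put `p = q ^ 2` and `s = q ^ (v + 1)`. Up to the constant `(1 - q) c_{q,v}`, the numbers
`s ^ k j_v(q ^ k, q ^ 2)`, `k ∈ ℤ`, are the Laurent coefficients of `(s / w; p)_∞ / (s w; p)_∞`: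
this is Euler's expansion of `(x; p)_∞` and of its reciprocal, combined with the symmetry in `w` and
`b` of `∑ f_n w ^ n (b p ^ n; p)_∞`, where `f_n` are the coefficients of `(x; p)_∞`. As the quotient
is unimodular on the circle `|w| = 1`, the integer translates of this sequence are orthonormal in
`ℓ²(ℤ)`. Up to constants, the weighted samples `s ^ k f(q ^ k)` and `s ^ k k_z(q ^ k)` are the
combinations of these translates with coefficients `s ^ m u(q ^ m)` and
`s ^ m j_v(z q ^ m, q ^ 2)`, `m ≥ n₀`. By Parseval, the sum over `k` of their products is the `ℓ²`
pairing of the two coefficient sequences, which is the Jackson integral defining `f(z)`.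
-/

open Filter Topology ComplexConjugate
open scoped lp InnerProductSpace

namespace QSampling

lemma summable_norm_mul_of_norm_le {ι R : Type*} [NormedRing R] {x y : ι → R}
    (hx : ∃ C, ∀ i, ‖x i‖ ≤ C) (hy : Summable fun i => ‖y i‖) :
    Summable fun i => ‖x i * y i‖ := by
  obtain ⟨C, hC⟩ := hx
  exact .of_nonneg_of_le (fun _ => norm_nonneg _) (fun i => (norm_mul_le _ _).trans
    (mul_le_mul_of_nonneg_right (hC i) (norm_nonneg _))) (hy.mul_left C)

lemma summable_norm_comp_mul {ι κ R : Type*} [NormedRing R] {x : κ → R} {y : ι → R} {e : ι → κ}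
    (hx : Summable fun i => ‖x i‖) (hy : Summable fun i => ‖y i‖) :
    Summable fun i => ‖x (e i) * y i‖ :=
  summable_norm_mul_of_norm_le
    ⟨∑' i, ‖x i‖, fun i => hx.le_tsum (e i) fun _ _ => norm_nonneg _⟩ hy

section CrossCorrelation

variable {G R : Type*} [AddCommGroup G] [NormedCommRing R]

/-- The cross-correlation of two families indexed by an abelian group. -/
noncomputable def crossCorrelation (x y : G → R) (k : G) : R := ∑' i, x (i + k) * y i

variable {x y : G → R}

lemma summable_norm_crossCorrelation (hx : Summable fun i => ‖x i‖)
    (hy : Summable fun i => ‖y i‖) : Summable fun k => ‖crossCorrelation x y k‖ := by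
  have hshear : Function.Injective fun t : G × G => (t.2 + t.1, t.2) := by
    rintro ⟨k, i⟩ ⟨l, j⟩ h
    simp only [Prod.mk.injEq] at h
    obtain ⟨h, rfl⟩ := h
    rw [add_left_cancel h]
  have hxy : Summable fun t : G × G => ‖x (t.2 + t.1) * y t.2‖ := by
    simpa only [Function.comp_def] using (hx.mul_norm hy).comp_injective hshear
  exact .of_nonneg_of_le (fun _ => norm_nonneg _)
    (fun k => norm_tsum_le_tsum_norm (hxy.prod_factor k)) hxy.prod

variable [CompleteSpace R]

lemma summable_correlation_terms (hx : Summable fun i => ‖x i‖) (hy : Summable fun i => ‖y i‖)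
    (n m : G) : Summable fun t : G × G × G =>
      (x (t.2.1 + (t.1 + n)) * y t.2.1) * (x (t.2.2 + (t.1 + m)) * y t.2.2) := by
  have hinj : Function.Injective fun t : G × G × G => (t.2.1 + (t.1 + n), t.2.1, t.2.2) := by
    rintro ⟨k, i, j⟩ ⟨k', i', j'⟩ h
    simp only [Prod.mk.injEq] at h
    obtain ⟨h, rfl, rfl⟩ := h
    rw [add_right_cancel (add_left_cancel h)]
  have hxyy : Summable fun t : G × G × G => ‖x (t.2.1 + (t.1 + n)) * (y t.2.1 * y t.2.2)‖ := by
    simpa only [Function.comp_def] using (hx.mul_norm (hy.mul_norm hy)).comp_injective hinj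
  refine (summable_norm_comp_mul (e := fun t => t.2.2 + (t.1 + m))
    hx hxyy).of_norm.congr fun t => ?_
  ring

/-- Both sides are the triple sum of `x (i + k + n) y i x (j + k + m) y j`: the left side collects
the terms with given `k`, the right side those with given `k + i + j + m`. -/
theorem tsum_crossCorrelation_mul_crossCorrelation (hx : Summable fun i => ‖x i‖)
    (hy : Summable fun i => ‖y i‖) (n m : G) :
    ∑' k, crossCorrelation x y (k + n) * crossCorrelation x y (k + m) =
      ∑' N, (∑' j, x (N + (n - m) - j) * y j) * ∑' i, x (N - i) * y i := by
  let shear : G × G × G ≃ G × G × G :=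
    { toFun := fun t => (t.1 - t.2.1 - t.2.2 - m, t.2.1, t.2.2)
      invFun := fun t => (t.1 + m + t.2.2 + t.2.1, t.2.1, t.2.2)
      left_inv := fun t => by simp
      right_inv := fun t => by simp }
  have hterm := summable_correlation_terms hx hy n m
  have hshear (t : G × G × G) :
      x ((shear t).2.1 + ((shear t).1 + n)) * y (shear t).2.1 *
          (x ((shear t).2.2 + ((shear t).1 + m)) * y (shear t).2.2) =
        (x (t.1 - t.2.1) * y t.2.1) * (x (t.1 + (n - m) - t.2.2) * y t.2.2) := by
    simp only [shear, Equiv.coe_fn_mk]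
    rw [show t.2.1 + (t.1 - t.2.1 - t.2.2 - m + n) = t.1 + (n - m) - t.2.2 by abel,
      show t.2.2 + (t.1 - t.2.1 - t.2.2 - m + m) = t.1 - t.2.1 by abel]
    ring
  have hterm' := (shear.summable_iff.2 hterm).congr hshear
  calc ∑' k, crossCorrelation x y (k + n) * crossCorrelation x y (k + m)
      = ∑' k, ∑' ij : G × G,
          (x (ij.1 + (k + n)) * y ij.1) * (x (ij.2 + (k + m)) * y ij.2) :=
        tsum_congr fun k => tsum_mul_tsum_of_summable_norm
          (summable_norm_comp_mul hx hy) (summable_norm_comp_mul hx hy)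
    _ = ∑' N, ∑' ij : G × G, (x (N - ij.1) * y ij.1) * (x (N + (n - m) - ij.2) * y ij.2) := by
        rw [← hterm.tsum_prod, ← hterm'.tsum_prod, ← shear.tsum_eq]
        exact tsum_congr hshear
    _ = ∑' N, (∑' j, x (N + (n - m) - j) * y j) * ∑' i, x (N - i) * y i := by
        refine tsum_congr fun N => ?_
        rw [mul_comm (∑' j, _)]
        exact (tsum_mul_tsum_of_summable_norm (summable_norm_comp_mul hx hy)
          (summable_norm_comp_mul hx hy)).symm

theorem tsum_crossCorrelation_mul_crossCorrelation_of_convolution_eq_single [DecidableEq G]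
    (hx : Summable fun i => ‖x i‖) (hy : Summable fun i => ‖y i‖)
    (hxy : ∀ N, ∑' i, x (N - i) * y i = Pi.single (M := fun _ : G => R) 0 1 N) (n m : G) :
    ∑' k, crossCorrelation x y (k + n) * crossCorrelation x y (k + m) =
      if n = m then 1 else 0 := by
  rw [tsum_crossCorrelation_mul_crossCorrelation hx hy, tsum_eq_single 0 fun N hN => by
    rw [hxy N, Pi.single_eq_of_ne hN, mul_zero]]
  simp only [hxy, zero_add, Pi.single_eq_same, mul_one, Pi.single_apply, sub_eq_zero]

end CrossCorrelation

section ZeroExtension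

/-- The extension of a sequence on `ℕ` to `ℤ` by zero. -/
noncomputable def extendInt {R : Type*} [Zero R] (g : ℕ → R) : ℤ → R :=
  Function.extend Nat.cast g 0

@[simp]
lemma extendInt_natCast {R : Type*} [Zero R] (g : ℕ → R) (n : ℕ) : extendInt g n = g n :=
  Nat.cast_injective.extend_apply g _ n

lemma extendInt_of_notMem_range {R : Type*} [Zero R] (g : ℕ → R) {i : ℤ}
    (hi : i ∉ Set.range ((↑) : ℕ → ℤ)) : extendInt g i = 0 :=
  Function.extend_apply' g _ i hi

lemma extendInt_of_neg {R : Type*} [Zero R] (g : ℕ → R) {i : ℤ} (hi : i < 0) :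
    extendInt g i = 0 :=
  extendInt_of_notMem_range g (by rintro ⟨n, rfl⟩; omega)

lemma summable_norm_extendInt {E : Type*} [SeminormedAddCommGroup E] {g : ℕ → E}
    (hg : Summable fun n => ‖g n‖) : Summable fun i => ‖extendInt g i‖ := by
  rw [← Nat.cast_injective.summable_iff (f := fun i : ℤ => ‖extendInt g i‖)]
  · simpa [Function.comp_def] using hg
  · intro i hi
    rw [extendInt_of_notMem_range g hi, norm_zero]

variable {R : Type*} [NonUnitalNonAssocSemiring R] [TopologicalSpace R]

lemma tsum_mul_extendInt (x : ℤ → R) (g : ℕ → R) :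
    ∑' i, x i * extendInt g i = ∑' n : ℕ, x n * g n := by
  rw [← Nat.cast_injective.tsum_eq (f := fun i : ℤ => x i * extendInt g i)]
  · simp
  · exact fun i hi => by_contra fun h => right_ne_zero_of_mul hi (extendInt_of_notMem_range g h)

lemma tsum_extendInt_sub_mul_extendInt (g h : ℕ → R) (N : ℤ) :
    ∑' i, extendInt g (N - i) * extendInt h i =
      extendInt (fun n => ∑ ij ∈ Finset.HasAntidiagonal.antidiagonal n, g ij.1 * h ij.2) N := by
  rw [tsum_mul_extendInt fun i => extendInt g (N - i)]
  rcases lt_or_ge N 0 with hN | hN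
  · simp only [extendInt_of_neg _ hN]
    exact (tsum_congr fun n => by rw [extendInt_of_neg g (by omega), zero_mul]).trans tsum_zero
  · lift N to ℕ using hN
    rw [extendInt_natCast, tsum_eq_sum (s := Finset.range (N + 1)) fun n hn => by
      rw [extendInt_of_neg g (by simp at hn; omega), zero_mul],
      ← Finset.Nat.sum_antidiagonal_swap, Finset.Nat.sum_antidiagonal_eq_sum_range_succ_mk]
    refine Finset.sum_congr rfl fun n hn => ?_
    rw [← Nat.cast_sub (Finset.mem_range_succ_iff.1 hn), extendInt_natCast]
    rfl

end ZeroExtension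

section OrthonormalSequences

variable {𝕜 ι κ : Type*} [RCLike 𝕜]

theorem tsum_tsum_mul_mul_conj_tsum_of_orthonormal {a : ι → ℓ²(κ, 𝕜)} (ha : Orthonormal 𝕜 a)
    (f g : ℓ²(ι, 𝕜)) :
    ∑' k, (∑' i, f i * a i k) * conj (∑' i, g i * a i k) = ∑' i, f i * conj (g i) := by
  let V := ha.orthogonalFamily.linearIsometry
  have hV (h : ℓ²(ι, 𝕜)) (k : κ) : V h k = ∑' i, h i * a i k :=
    (((lp.evalCLM 𝕜 (fun _ : κ => 𝕜) 2 k).hasSum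
      (ha.orthogonalFamily.hasSum_linearIsometry h)).tsum_eq).symm
  simpa only [lp.inner_eq_tsum, RCLike.inner_apply, hV] using V.inner_map_map g f

lemma memℓp_two_of_summable_norm {E : Type*} [NormedAddCommGroup E] {f : ι → E}
    (hf : Summable fun i => ‖f i‖) : Memℓp f 2 :=
  (memℓp_gen (p := 1) (by simpa using hf)).of_exponent_ge one_le_two

end OrthonormalSequences

section OrthonormalShifts

variable {𝕜 G : Type*} [RCLike 𝕜] [AddGroup G] {α : G → ℝ}

/-- The translate `k ↦ α (k + m)` of an absolutely summable real family as a vector of `ℓ²`. -/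
noncomputable def shiftVec (𝕜 : Type*) [RCLike 𝕜] (hα : Summable fun k => ‖α k‖) (m : G) :
    ℓ²(G, 𝕜) :=
  ⟨fun k => (α (k + m) : 𝕜), memℓp_two_of_summable_norm (by
    simpa [Function.comp_def] using hα.comp_injective (add_left_injective m))⟩

lemma shiftVec_apply (hα : Summable fun k => ‖α k‖) (m k : G) :
    shiftVec 𝕜 hα m k = (α (k + m) : 𝕜) := rfl

lemma orthonormal_shiftVec [DecidableEq G] (hα : Summable fun k => ‖α k‖)
    (horth : ∀ n m, ∑' k, α (k + n) * α (k + m) = if n = m then 1 else 0) :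
    Orthonormal 𝕜 (shiftVec 𝕜 hα) := by
  rw [orthonormal_iff_ite]
  intro n m
  have hinner : inner 𝕜 (shiftVec 𝕜 hα n) (shiftVec 𝕜 hα m) =
      ((∑' k, α (k + m) * α (k + n) : ℝ) : 𝕜) := by
    simp [lp.inner_eq_tsum, shiftVec_apply, RCLike.inner_apply, RCLike.ofReal_tsum]
  rw [hinner, horth]
  simp [eq_comm]

theorem tsum_tsum_mul_shift_mul_tsum_mul_shift [DecidableEq G] {ι : Type*}
    (hα : Summable fun k => ‖α k‖)
    (horth : ∀ n m, ∑' k, α (k + n) * α (k + m) = if n = m then 1 else 0) {e : ι → G}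
    (he : Function.Injective e) {f g : ι → 𝕜} (hf : Memℓp f 2) (hg : Memℓp g 2) :
    ∑' k, (∑' i, f i * (α (k + e i) : 𝕜)) * ∑' i, g i * (α (k + e i) : 𝕜) =
      ∑' i, f i * g i := by
  have key := tsum_tsum_mul_mul_conj_tsum_of_orthonormal
    ((orthonormal_shiftVec hα horth).comp e he) ⟨f, hf⟩ (star ⟨g, hg⟩)
  simpa [shiftVec_apply, RCLike.conj_tsum] using key

end OrthonormalShifts

section QPochhammer

variable {b p : ℝ}

lemma qPoch_succ (b p : ℝ) (n : ℕ) : qPoch b p (n + 1) = qPoch b p n * (1 - b * p ^ n) :=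
  Finset.prod_range_succ _ n

lemma summable_norm_neg_mul_pow (hp : |p| < 1) (b : ℝ) : Summable fun i : ℕ => ‖-(b * p ^ i)‖ :=
  ((summable_geometric_of_abs_lt_one hp).mul_left b).neg.norm

lemma multipliable_one_sub_mul_pow (hp : |p| < 1) (b : ℝ) :
    Multipliable fun i : ℕ => 1 - b * p ^ i := by
  simpa only [sub_eq_add_neg] using
    multipliable_one_add_of_summable (summable_norm_neg_mul_pow hp b)

lemma tendsto_qPoch (hp : |p| < 1) (b : ℝ) :
    Tendsto (qPoch b p) atTop (𝓝 (qPochInf b p)) :=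
  (multipliable_one_sub_mul_pow hp b).hasProd.tendsto_prod_nat

lemma qPochInf_eq_qPoch_mul_qPochInf (hp : |p| < 1) (b : ℝ) (n : ℕ) :
    qPochInf b p = qPoch b p n * qPochInf (b * p ^ n) p := by
  have hshift (i : ℕ) : 1 - b * p ^ (i + n) = 1 - b * p ^ n * p ^ i := by ring
  rw [qPochInf, ← Multipliable.prod_mul_tprod_nat_mul' (k := n)
    ((multipliable_one_sub_mul_pow hp (b * p ^ n)).congr fun i => (hshift i).symm)]
  simp only [hshift, qPoch, qPochInf]

lemma abs_mul_pow_lt_one (hb : |b| < 1) (hp : |p| < 1) (n : ℕ) : |b * p ^ n| < 1 := by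
  rw [abs_mul, abs_pow]
  exact (mul_le_of_le_one_right (abs_nonneg b) (pow_le_one₀ (abs_nonneg p) hp.le)).trans_lt hb

lemma qPochInf_ne_zero (hb : |b| < 1) (hp : |p| < 1) : qPochInf b p ≠ 0 := by
  have hfactor (i : ℕ) : 1 + -(b * p ^ i) ≠ 0 := by
    have := (abs_lt.1 (abs_mul_pow_lt_one hb hp i)).2
    linarith
  simpa only [qPochInf, sub_eq_add_neg] using
    tprod_one_add_ne_zero_of_summable hfactor (summable_norm_neg_mul_pow hp b)

lemma qPoch_ne_zero (hb : |b| < 1) (hp : |p| < 1) (n : ℕ) : qPoch b p n ≠ 0 :=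
  left_ne_zero_of_mul (qPochInf_eq_qPoch_mul_qPochInf hp b n ▸ qPochInf_ne_zero hb hp)

lemma exists_norm_inv_qPoch_le (hb : |b| < 1) (hp : |p| < 1) :
    ∃ C, ∀ n, ‖(qPoch b p n)⁻¹‖ ≤ C := by
  obtain ⟨C, hC⟩ := ((tendsto_qPoch hp b).inv₀ (qPochInf_ne_zero hb hp)).norm.bddAbove_range
  exact ⟨C, fun n => hC ⟨n, rfl⟩⟩

theorem eq_qPochInf_of_functional_eq (hp : |p| < 1) {F : ℝ → ℝ} (hF₀ : F 0 = 1)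
    (hcont : ContinuousAt F 0) (hF : ∀ x, F x = (1 - x) * F (x * p)) (x : ℝ) :
    F x = qPochInf x p := by
  have hiter (n : ℕ) : qPoch x p n * F (x * p ^ n) = F x := by
    induction n with
    | zero => simp [qPoch]
    | succ n ih => rw [qPoch_succ, pow_succ, ← mul_assoc x, mul_assoc, ← hF, ih]
  have hx : Tendsto (fun n : ℕ => x * p ^ n) atTop (𝓝 0) := by
    simpa using (tendsto_pow_atTop_nhds_zero_of_abs_lt_one hp).const_mul x
  have hlim := (tendsto_qPoch hp x).mul (hcont.tendsto.comp hx)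
  simp only [Function.comp_apply, hiter, hF₀, mul_one] at hlim
  exact tendsto_nhds_unique tendsto_const_nhds hlim

end QPochhammer

section Euler

variable {p : ℝ}

/-- The coefficient `1 / (p; p)_n` of `x ^ n` in Euler's expansion of `1 / (x; p)_∞`. -/
noncomputable def invQPochInfCoeff (p : ℝ) (n : ℕ) : ℝ := (qPoch p p n)⁻¹

/-- The coefficient `(-1) ^ n p ^ (n (n - 1) / 2) / (p; p)_n` of `x ^ n` in Euler's expansion of
`(x; p)_∞`. -/
noncomputable def qPochInfCoeff (p : ℝ) (n : ℕ) : ℝ :=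
  (-1) ^ n * p ^ n.choose 2 * invQPochInfCoeff p n

@[simp]
lemma invQPochInfCoeff_zero (p : ℝ) : invQPochInfCoeff p 0 = 1 := by
  simp [invQPochInfCoeff, qPoch]

@[simp]
lemma qPochInfCoeff_zero (p : ℝ) : qPochInfCoeff p 0 = 1 := by simp [qPochInfCoeff]

lemma one_sub_pow_ne_zero (hp : |p| < 1) {n : ℕ} (hn : n ≠ 0) : 1 - p ^ n ≠ 0 := by
  have := (abs_lt.1 ((abs_pow p n).trans_lt (pow_lt_one₀ (abs_nonneg p) hp hn))).2
  linarith

lemma invQPochInfCoeff_succ (hp : |p| < 1) (n : ℕ) :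
    (1 - p ^ (n + 1)) * invQPochInfCoeff p (n + 1) = invQPochInfCoeff p n := by
  have := one_sub_pow_ne_zero hp n.succ_ne_zero
  rw [invQPochInfCoeff, invQPochInfCoeff, qPoch_succ, ← pow_succ', mul_inv]
  field_simp

lemma qPochInfCoeff_succ (hp : |p| < 1) (n : ℕ) :
    (1 - p ^ (n + 1)) * qPochInfCoeff p (n + 1) = -p ^ n * qPochInfCoeff p n := by
  rw [qPochInfCoeff, mul_left_comm, invQPochInfCoeff_succ hp, qPochInfCoeff,
    Nat.choose_succ_succ' n 1, Nat.choose_one_right]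
  ring

lemma exists_norm_invQPochInfCoeff_le (hp : |p| < 1) : ∃ C, ∀ n, ‖invQPochInfCoeff p n‖ ≤ C :=
  exists_norm_inv_qPoch_le hp hp

open PowerSeries in
/-- The generating functions `E` and `F` satisfy `(1 - X) E = E(pX)` and `F = (1 - X) F(pX)`, so
`EF` is invariant under `X ↦ pX` and hence constant. -/
theorem sum_antidiagonal_invQPochInfCoeff_mul_qPochInfCoeff (hp : |p| < 1) (N : ℕ) :
    ∑ ij ∈ Finset.HasAntidiagonal.antidiagonal N,
      invQPochInfCoeff p ij.1 * qPochInfCoeff p ij.2 = if N = 0 then 1 else 0 := by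
  let E := PowerSeries.mk (invQPochInfCoeff p)
  let F := PowerSeries.mk (qPochInfCoeff p)
  have hE : (1 - X) * E = rescale p E := by
    ext (_ | n)
    · simp [sub_mul, E]
    · simp only [sub_mul, one_mul, map_sub, coeff_succ_X_mul, coeff_rescale, coeff_mk, E]
      linear_combination invQPochInfCoeff_succ hp n
  have hF : F = (1 - X) * rescale p F := by
    ext (_ | n)
    · simp only [sub_mul, one_mul, map_sub, coeff_zero_X_mul, coeff_rescale, pow_zero, sub_zero]
    · simp only [sub_mul, one_mul, map_sub, coeff_succ_X_mul, coeff_rescale, coeff_mk, F]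
      linear_combination qPochInfCoeff_succ hp n
  have hEF : E * F = rescale p (E * F) := by
    calc E * F = E * ((1 - X) * rescale p F) := by rw [← hF]
      _ = rescale p E * rescale p F := by rw [← hE]; ring
      _ = rescale p (E * F) := (map_mul _ E F).symm
  have hcoeff := congrArg (coeff N) hEF
  simp only [coeff_rescale, coeff_mul, E, F, coeff_mk] at hcoeff
  split_ifs with hN
  · simp [hN]
  · exact (mul_eq_zero.1 (by linear_combination hcoeff)).resolve_left (one_sub_pow_ne_zero hp hN)

lemma summable_norm_invQPochInfCoeff_mul_pow (hp : |p| < 1) {x : ℝ} (hx : |x| < 1) :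
    Summable fun n => ‖invQPochInfCoeff p n * x ^ n‖ :=
  summable_norm_mul_of_norm_le (exists_norm_invQPochInfCoeff_le hp)
    (summable_geometric_of_abs_lt_one hx).norm

lemma summable_pow_choose_two_mul_pow (hp : |p| < 1) (x : ℝ) :
    Summable fun n : ℕ => p ^ n.choose 2 * x ^ n := by
  have hratio : Tendsto (fun n : ℕ => |p| ^ n * |x|) atTop (𝓝 0) := by
    simpa using (tendsto_pow_atTop_nhds_zero_of_lt_one (abs_nonneg p) hp).mul_const |x|
  refine summable_of_ratio_norm_eventually_le one_half_lt_one ?_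
  filter_upwards [hratio.eventually_le_const one_half_pos] with n hn
  calc ‖p ^ (n + 1).choose 2 * x ^ (n + 1)‖ = |p| ^ n * |x| * ‖p ^ n.choose 2 * x ^ n‖ := by
        rw [Nat.choose_succ_succ' n 1, Nat.choose_one_right, pow_add, pow_succ x]
        simp only [norm_mul, norm_pow, Real.norm_eq_abs]
        ring
    _ ≤ 1 / 2 * ‖p ^ n.choose 2 * x ^ n‖ := by gcongr

lemma summable_norm_qPochInfCoeff_mul_pow (hp : |p| < 1) (x : ℝ) :
    Summable fun n => ‖qPochInfCoeff p n * x ^ n‖ :=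
  (summable_norm_mul_of_norm_le (exists_norm_invQPochInfCoeff_le hp)
    (summable_pow_choose_two_mul_pow hp x).norm).congr fun n => by
      simp [qPochInfCoeff, mul_left_comm, mul_assoc]

lemma continuousAt_tsum_qPochInfCoeff_mul_pow (hp : |p| < 1) :
    ContinuousAt (fun x => ∑' n, qPochInfCoeff p n * x ^ n) 0 := by
  refine ContinuousOn.continuousAt (continuousOn_tsum (s := Set.Icc (-1) 1) (fun n => by fun_prop)
    (summable_norm_qPochInfCoeff_mul_pow hp 1) fun n x hx => ?_) (Icc_mem_nhds (by simp) (by simp))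
  rw [norm_mul, one_pow, mul_one, norm_pow]
  exact mul_le_of_le_one_right (norm_nonneg _) (pow_le_one₀ (norm_nonneg x) (abs_le.2 hx))

lemma tsum_qPochInfCoeff_mul_pow_functional_eq (hp : |p| < 1) (x : ℝ) :
    ∑' n, qPochInfCoeff p n * x ^ n = (1 - x) * ∑' n, qPochInfCoeff p n * (x * p) ^ n := by
  have hx := (summable_norm_qPochInfCoeff_mul_pow hp x).of_norm
  have hxp := (summable_norm_qPochInfCoeff_mul_pow hp (x * p)).of_norm
  have hsub : ∑' n, qPochInfCoeff p n * x ^ n - ∑' n, qPochInfCoeff p n * (x * p) ^ n =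
      -x * ∑' n, qPochInfCoeff p n * (x * p) ^ n := by
    rw [← hx.tsum_sub hxp, (hx.sub hxp).tsum_eq_zero_add, ← tsum_mul_left]
    simp only [pow_zero, sub_self, zero_add]
    refine tsum_congr fun n => ?_
    rw [mul_pow, mul_pow, pow_succ x]
    linear_combination (x ^ n * x) * qPochInfCoeff_succ hp n
  linear_combination hsub

theorem qPochInf_eq_tsum (hp : |p| < 1) (x : ℝ) :
    qPochInf x p = ∑' n, qPochInfCoeff p n * x ^ n :=
  (eq_qPochInf_of_functional_eq hp (by rw [tsum_eq_single 0] <;> simp +contextual)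
    (continuousAt_tsum_qPochInfCoeff_mul_pow hp) (tsum_qPochInfCoeff_mul_pow_functional_eq hp)
    x).symm

lemma qPochInf_zpow_neg (hp : |p| < 1) (hp₀ : p ≠ 0) (n : ℕ) : qPochInf (p ^ (-n : ℤ)) p = 0 := by
  rw [qPochInf_eq_qPoch_mul_qPochInf hp _ (n + 1), qPoch_succ, zpow_neg, zpow_natCast,
    inv_mul_cancel₀ (pow_ne_zero n hp₀), sub_self, mul_zero, zero_mul]

theorem qPochInf_zpow_succ (hp : |p| < 1) (hp₀ : p ≠ 0) (k : ℤ) :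
    qPochInf (p ^ (k + 1)) p = qPochInf p p * extendInt (invQPochInfCoeff p) k := by
  rcases lt_or_ge k 0 with hk | hk
  · obtain ⟨n, hn⟩ := Int.eq_ofNat_of_zero_le (show 0 ≤ -(k + 1) by omega)
    rw [extendInt_of_neg _ hk, mul_zero, ← neg_neg (k + 1), hn, qPochInf_zpow_neg hp hp₀]
  · lift k to ℕ using hk
    rw [extendInt_natCast, qPochInf_eq_qPoch_mul_qPochInf hp p k, invQPochInfCoeff,
      mul_right_comm, mul_inv_cancel₀ (qPoch_ne_zero hp hp k), one_mul, ← pow_succ', ← zpow_natCast,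
      Nat.cast_succ]

end Euler

section BesselSeries

variable {b p : ℝ}

theorem tsum_mul_qPochInf_mul_pow_comm (hp : |p| < 1) (w b : ℝ) :
    ∑' n, qPochInfCoeff p n * w ^ n * qPochInf (b * p ^ n) p =
      ∑' m, qPochInfCoeff p m * b ^ m * qPochInf (w * p ^ m) p := by
  let term (n m : ℕ) : ℝ :=
    p ^ (n * m) * ((qPochInfCoeff p n * w ^ n) * (qPochInfCoeff p m * b ^ m))
  have hterm : Summable (Function.uncurry term) :=
    (summable_norm_mul_of_norm_le (x := fun t : ℕ × ℕ => p ^ (t.1 * t.2))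
      ⟨1, fun t => by simpa using pow_le_one₀ (abs_nonneg p) hp.le⟩
      ((summable_norm_qPochInfCoeff_mul_pow hp w).mul_norm
        (summable_norm_qPochInfCoeff_mul_pow hp b))).of_norm
  calc ∑' n, qPochInfCoeff p n * w ^ n * qPochInf (b * p ^ n) p
      = ∑' n, ∑' m, term n m := tsum_congr fun n => by
        rw [qPochInf_eq_tsum hp, ← tsum_mul_left]
        exact tsum_congr fun m => by simp only [term]; ring
    _ = ∑' m, ∑' n, term n m := hterm.tsum_comm.symm
    _ = ∑' m, qPochInfCoeff p m * b ^ m * qPochInf (w * p ^ m) p := tsum_congr fun m => by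
        rw [qPochInf_eq_tsum hp, ← tsum_mul_left]
        exact tsum_congr fun n => by simp only [term]; ring

theorem qPochInf_mul_tsum_div_qPoch (hp : |p| < 1) (hp₀ : p ≠ 0) (hb : |b| < 1) (k : ℤ) :
    qPochInf b p * ∑' n, qPochInfCoeff p n / qPoch b p n * (p ^ (k + 1)) ^ n =
      qPochInf p p * ∑' m : ℕ, qPochInfCoeff p m * b ^ m *
        extendInt (invQPochInfCoeff p) (m + k) := by
  calc qPochInf b p * ∑' n, qPochInfCoeff p n / qPoch b p n * (p ^ (k + 1)) ^ n
      = ∑' n, qPochInfCoeff p n * (p ^ (k + 1)) ^ n * qPochInf (b * p ^ n) p := by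
        rw [← tsum_mul_left]
        refine tsum_congr fun n => ?_
        rw [qPochInf_eq_qPoch_mul_qPochInf hp b n]
        field_simp [qPoch_ne_zero hb hp n]
    _ = ∑' m, qPochInfCoeff p m * b ^ m * qPochInf (p ^ (k + 1) * p ^ m) p :=
        tsum_mul_qPochInf_mul_pow_comm hp _ b
    _ = _ := by
        rw [← tsum_mul_left]
        refine tsum_congr fun m => ?_
        rw [← zpow_natCast p m, ← zpow_add₀ hp₀, show k + 1 + m = m + k + 1 by ring,
          qPochInf_zpow_succ hp hp₀]
        ring

/-- The Laurent coefficients of `w ↦ (s / w; p)_∞ / (s w; p)_∞`, as the cross-correlation of the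
Taylor coefficients of its denominator and numerator. -/
noncomputable def besselSeq (p s : ℝ) : ℤ → ℝ :=
  crossCorrelation (extendInt fun n => invQPochInfCoeff p n * s ^ n)
    (extendInt fun n => qPochInfCoeff p n * s ^ n)

variable {s : ℝ}

theorem zpow_mul_tsum_div_qPoch_eq_besselSeq (hp : |p| < 1) (hp₀ : p ≠ 0) (hs : |s| < 1)
    (hs₀ : s ≠ 0) (k : ℤ) :
    s ^ k * (qPochInf (s ^ 2) p / qPochInf p p *
        ∑' n, qPochInfCoeff p n / qPoch (s ^ 2) p n * (p ^ (k + 1)) ^ n) = besselSeq p s k := by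
  have hs2 : |s ^ 2| < 1 := (abs_pow s 2).trans_lt (pow_lt_one₀ (abs_nonneg s) hs two_ne_zero)
  rw [div_mul_eq_mul_div, qPochInf_mul_tsum_div_qPoch hp hp₀ hs2,
    mul_div_cancel_left₀ _ (qPochInf_ne_zero hp hp), besselSeq, crossCorrelation,
    tsum_mul_extendInt fun i => extendInt _ (i + k), ← tsum_mul_left]
  refine tsum_congr fun m => ?_
  rcases lt_or_ge (m + k : ℤ) 0 with hmk | hmk
  · simp only [extendInt_of_neg _ hmk, mul_zero, zero_mul]
  · obtain ⟨l, hl⟩ := Int.eq_ofNat_of_zero_le hmk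
    obtain rfl : k = l - m := by omega
    rw [hl, extendInt_natCast, extendInt_natCast, zpow_sub₀ hs₀, zpow_natCast, zpow_natCast]
    field_simp
    ring

lemma summable_norm_extendInt_invQPochInfCoeff (hp : |p| < 1) (hs : |s| < 1) :
    Summable fun i => ‖extendInt (fun n => invQPochInfCoeff p n * s ^ n) i‖ :=
  summable_norm_extendInt (summable_norm_invQPochInfCoeff_mul_pow hp hs)

lemma summable_norm_extendInt_qPochInfCoeff (hp : |p| < 1) (s : ℝ) :
    Summable fun i => ‖extendInt (fun n => qPochInfCoeff p n * s ^ n) i‖ :=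
  summable_norm_extendInt (summable_norm_qPochInfCoeff_mul_pow hp s)

lemma summable_norm_besselSeq (hp : |p| < 1) (hs : |s| < 1) :
    Summable fun k => ‖besselSeq p s k‖ :=
  summable_norm_crossCorrelation (summable_norm_extendInt_invQPochInfCoeff hp hs)
    (summable_norm_extendInt_qPochInfCoeff hp s)

lemma sum_antidiagonal_invQPochInfCoeff_mul_pow_mul (hp : |p| < 1) (s : ℝ) (N : ℕ) :
    ∑ ij ∈ Finset.HasAntidiagonal.antidiagonal N,
      invQPochInfCoeff p ij.1 * s ^ ij.1 * (qPochInfCoeff p ij.2 * s ^ ij.2) =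
        if N = 0 then 1 else 0 := by
  calc ∑ ij ∈ Finset.HasAntidiagonal.antidiagonal N,
        invQPochInfCoeff p ij.1 * s ^ ij.1 * (qPochInfCoeff p ij.2 * s ^ ij.2)
      = s ^ N * ∑ ij ∈ Finset.HasAntidiagonal.antidiagonal N,
          invQPochInfCoeff p ij.1 * qPochInfCoeff p ij.2 := by
        rw [Finset.mul_sum]
        refine Finset.sum_congr rfl fun ij hij => ?_
        rw [← Finset.HasAntidiagonal.mem_antidiagonal.1 hij, pow_add]
        ring
    _ = if N = 0 then 1 else 0 := by
        rw [sum_antidiagonal_invQPochInfCoeff_mul_qPochInfCoeff hp]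
        split_ifs with hN <;> simp [hN]

lemma tsum_extendInt_invQPochInfCoeff_sub_mul (hp : |p| < 1) (s : ℝ) (N : ℤ) :
    ∑' i, extendInt (fun n => invQPochInfCoeff p n * s ^ n) (N - i) *
      extendInt (fun n => qPochInfCoeff p n * s ^ n) i =
        Pi.single (M := fun _ : ℤ => ℝ) 0 1 N := by
  rw [tsum_extendInt_sub_mul_extendInt]
  simp only [sum_antidiagonal_invQPochInfCoeff_mul_pow_mul hp, Pi.single_apply]
  rcases lt_or_ge N 0 with hN | hN
  · rw [extendInt_of_neg _ hN, if_neg hN.ne]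
  · lift N to ℕ using hN
    simp

theorem tsum_besselSeq_mul_besselSeq (hp : |p| < 1) (hs : |s| < 1) (n m : ℤ) :
    ∑' k, besselSeq p s (k + n) * besselSeq p s (k + m) = if n = m then 1 else 0 :=
  tsum_crossCorrelation_mul_crossCorrelation_of_convolution_eq_single
    (summable_norm_extendInt_invQPochInfCoeff hp hs) (summable_norm_extendInt_qPochInfCoeff hp s)
    (tsum_extendInt_invQPochInfCoeff_sub_mul hp s) n m

theorem tsum_tsum_mul_besselSeq_mul_tsum_mul_besselSeq (hp : |p| < 1) (hs : |s| < 1) {ι : Type*}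
    {e : ι → ℤ} (he : Function.Injective e) {f g : ι → ℂ} (hf : Memℓp f 2) (hg : Memℓp g 2) :
    ∑' k, (∑' i, f i * besselSeq p s (k + e i)) * ∑' i, g i * besselSeq p s (k + e i) =
      ∑' i, f i * g i :=
  tsum_tsum_mul_shift_mul_tsum_mul_shift (summable_norm_besselSeq hp hs)
    (tsum_besselSeq_mul_besselSeq hp hs) he hf hg

end BesselSeries

section BesselFunction

lemma pow_mul_succ_eq_sq_pow_choose_mul (q : ℝ) (n : ℕ) :
    q ^ (n * (n + 1)) = (q ^ 2) ^ n.choose 2 * (q ^ 2) ^ n := by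
  rw [← pow_add, ← pow_mul]
  congr 1
  induction n with
  | zero => rfl
  | succ n ih =>
    rw [Nat.choose_succ_succ' n 1, Nat.choose_one_right]
    linarith

theorem jv_eq_tsum (v q : ℝ) (z : ℂ) :
    jv v q z = ∑' n, ((qPochInfCoeff (q ^ 2) n / qPoch (q ^ (2 * v + 2)) (q ^ 2) n : ℝ) : ℂ) *
      ((q : ℂ) ^ 2 * z ^ 2) ^ n := by
  refine tsum_congr fun n => ?_
  rw [← Complex.ofReal_pow q (n * (n + 1)), pow_mul_succ_eq_sq_pow_choose_mul, qPochInfCoeff,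
    invQPochInfCoeff, mul_pow, pow_mul z]
  push_cast
  simp only [div_eq_mul_inv, mul_inv]
  ring

lemma jv_ofReal (v q x : ℝ) : jv v q x = jvR v q x := by
  rw [jv, jvR, Complex.ofReal_tsum]
  push_cast
  rfl

lemma jvR_eq_tsum (v q x : ℝ) :
    jvR v q x = ∑' n, qPochInfCoeff (q ^ 2) n / qPoch (q ^ (2 * v + 2)) (q ^ 2) n *
      (q ^ 2 * x ^ 2) ^ n := by
  rw [← Complex.ofReal_inj, ← jv_ofReal, jv_eq_tsum]
  push_cast
  rfl

variable {q v : ℝ}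

lemma abs_sq_lt_one (hq0 : 0 < q) (hq1 : q < 1) : |q ^ 2| < 1 := by
  rw [abs_of_pos (by positivity)]
  exact pow_lt_one₀ hq0.le hq1 two_ne_zero

lemma abs_rpow_lt_one (hq0 : 0 < q) (hq1 : q < 1) {w : ℝ} (hw : 0 < w) : |q ^ w| < 1 := by
  rw [abs_of_pos (Real.rpow_pos_of_pos hq0 w)]
  exact Real.rpow_lt_one hq0.le hq1 hw

lemma exists_norm_jv_le (hq0 : 0 < q) (hq1 : q < 1) (hv : -1 < v) (R : ℝ) :
    ∃ M, ∀ z : ℂ, ‖z‖ ≤ R → ‖jv v q z‖ ≤ M := by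
  have hsum : Summable fun n => ‖(qPoch (q ^ (2 * v + 2)) (q ^ 2) n)⁻¹ *
      (qPochInfCoeff (q ^ 2) n * (q ^ 2 * R ^ 2) ^ n)‖ :=
    summable_norm_mul_of_norm_le
      (exists_norm_inv_qPoch_le (abs_rpow_lt_one hq0 hq1 (by linarith)) (abs_sq_lt_one hq0 hq1))
      (summable_norm_qPochInfCoeff_mul_pow (abs_sq_lt_one hq0 hq1) _)
  refine ⟨_, fun z hz => (jv_eq_tsum v q z).symm ▸ tsum_of_norm_bounded hsum.hasSum fun n => ?_⟩
  rw [div_eq_inv_mul, Complex.ofReal_mul, mul_assoc]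
  simp only [norm_mul, norm_pow, Complex.norm_real, Real.norm_eq_abs R]
  gcongr
  exact hz.trans (le_abs_self R)

end BesselFunction

section Sampling

variable {q v : ℝ}

theorem besselSeq_eq_zpow_mul_jvR (hq0 : 0 < q) (hq1 : q < 1) (hv : -1 < v) (k : ℤ) :
    besselSeq (q ^ 2) (q ^ (v + 1)) k =
      (1 - q) * cqv q v * ((q ^ (v + 1)) ^ k * jvR v q (q ^ k)) := by
  have hs2 : q ^ (2 * v + 2) = (q ^ (v + 1)) ^ 2 := by
    rw [← Real.rpow_natCast, ← Real.rpow_mul hq0.le]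
    congr 1
    push_cast
    ring
  have hpow : q ^ 2 * (q ^ k) ^ 2 = (q ^ 2) ^ (k + 1) := by
    rw [zpow_add_one₀ (by positivity), ← zpow_natCast (q ^ k), ← zpow_mul, mul_comm k, zpow_mul,
      mul_comm, zpow_natCast]
  have hq1' : 1 - q ≠ 0 := by linarith
  rw [← zpow_mul_tsum_div_qPoch_eq_besselSeq (abs_sq_lt_one hq0 hq1) (by positivity)
    (abs_rpow_lt_one hq0 hq1 (by linarith)) (by positivity), jvR_eq_tsum, hpow, cqv, hs2]
  field_simp

/-- The samples of `g` at `q ^ (n₀ + n)`, weighted so that `ℓ²` sums of them are Jackson integrals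
over `[0, q ^ n₀]` with respect to `t ^ (2 * v + 1) d_q t`. -/
noncomputable def weightedSamples (q v : ℝ) (n₀ : ℤ) (g : ℝ → ℂ) (n : ℕ) : ℂ :=
  (((q ^ (v + 1)) ^ (n₀ + n) : ℝ) : ℂ) * g (q ^ (n₀ + n))

lemma zpow_mul_zpow_rpow (hq0 : 0 < q) (v : ℝ) (m : ℤ) :
    q ^ m * (q ^ m) ^ (2 * v + 1) = ((q ^ (v + 1)) ^ m) ^ 2 := by
  simp only [← Real.rpow_intCast, ← Real.rpow_natCast, ← Real.rpow_mul hq0.le, ← Real.rpow_add hq0]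
  congr 1
  push_cast
  ring

lemma rpow_two_mul_intCast_mul (hq0 : 0 < q) (v : ℝ) (k : ℤ) :
    q ^ (2 * (k : ℝ) * (v + 1)) = ((q ^ (v + 1)) ^ k) ^ 2 := by
  rw [← zpow_mul_zpow_rpow hq0, ← Real.rpow_intCast, ← Real.rpow_mul hq0.le, ← Real.rpow_add hq0]
  congr 1
  ring

theorem qIntC0_rpow_mul (hq0 : 0 < q) (v : ℝ) (n₀ : ℤ) (g h : ℝ → ℂ) :
    qIntC0 q (q ^ n₀) (fun t => ((t ^ (2 * v + 1) : ℝ) : ℂ) * (g t * h t)) =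
      (1 - q) * ∑' n, weightedSamples q v n₀ g n * weightedSamples q v n₀ h n := by
  rw [qIntC0, Complex.ofReal_mul, mul_assoc, ← tsum_mul_left]
  push_cast
  congr 2 with n
  have hweight := congrArg Complex.ofReal (zpow_mul_zpow_rpow hq0 v (n₀ + n))
  rw [zpow_add₀ hq0.ne', zpow_natCast] at hweight
  simp only [weightedSamples, zpow_add₀ hq0.ne' n₀ n, zpow_natCast q n]
  push_cast at hweight ⊢
  linear_combination (g (q ^ n₀ * q ^ n) * h (q ^ n₀ * q ^ n)) * hweight

lemma memℓp_weightedSamples_ofReal (hq0 : 0 < q) {n₀ : ℤ} {u : ℝ → ℝ}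
    (hu : memL2a q v (q ^ n₀) u) : Memℓp (weightedSamples q v n₀ fun t => u t) 2 := by
  refine memℓp_gen ((hu.mul_left (q ^ n₀)).congr fun n => ?_)
  have hweight := zpow_mul_zpow_rpow hq0 v (n₀ + n)
  rw [zpow_add₀ hq0.ne', zpow_natCast] at hweight
  simp only [weightedSamples, zpow_add₀ hq0.ne' n₀ n, zpow_natCast q n, ENNReal.toReal_ofNat,
    Real.rpow_ofNat, norm_mul, Complex.norm_real, mul_pow, Real.norm_eq_abs, sq_abs]
  linear_combination u (q ^ n₀ * q ^ n) ^ 2 * hweight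

lemma memℓp_weightedSamples_jv (hq0 : 0 < q) (hq1 : q < 1) (hv : -1 < v) (n₀ : ℤ) (z : ℂ) :
    Memℓp (weightedSamples q v n₀ fun t => jv v q (z * t)) 2 := by
  obtain ⟨M, hM⟩ := exists_norm_jv_le hq0 hq1 hv (‖z‖ * q ^ n₀)
  have hbound (n : ℕ) : ‖jv v q (z * (q ^ (n₀ + n) : ℝ))‖ ≤ M := by
    refine hM _ ?_
    rw [norm_mul, Complex.norm_real, Real.norm_of_nonneg (by positivity), zpow_add₀ hq0.ne',
      zpow_natCast]
    gcongr
    exact mul_le_of_le_one_right (by positivity) (pow_le_one₀ hq0.le hq1.le)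
  have hgeom : Summable fun n : ℕ => ‖(((q ^ (v + 1)) ^ (n₀ + n : ℤ) : ℝ) : ℂ)‖ := by
    simp only [zpow_add₀ (Real.rpow_pos_of_pos hq0 (v + 1)).ne', zpow_natCast, Complex.norm_real]
    exact ((summable_geometric_of_abs_lt_one
      (abs_rpow_lt_one hq0 hq1 (by linarith))).mul_left _).norm
  refine memℓp_two_of_summable_norm
    ((summable_norm_mul_of_norm_le ⟨M, hbound⟩ hgeom).congr fun n => ?_)
  rw [weightedSamples, mul_comm]

theorem pwExt_eq_tsum (hq0 : 0 < q) (v : ℝ) (n₀ : ℤ) (u : ℝ → ℝ) (z : ℂ) :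
    pwExt q v (q ^ n₀) u z = ((1 - q) * cqv q v : ℝ) *
      ∑' n, weightedSamples q v n₀ (fun t => u t) n *
        weightedSamples q v n₀ (fun t => jv v q (z * t)) n := by
  rw [Complex.ofReal_mul, mul_comm ((1 - q : ℝ) : ℂ), mul_assoc]
  push_cast
  rw [← qIntC0_rpow_mul hq0, pwExt]
  congr 2 with t
  push_cast
  ring

theorem kkerC_eq_tsum (hq0 : 0 < q) (v : ℝ) (n₀ : ℤ) (z : ℂ) (y : ℝ) :
    kkerC q v (q ^ n₀) z y = cqv q v * ((1 - q) * cqv q v : ℝ) *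
      ∑' n, weightedSamples q v n₀ (fun t => jv v q (z * t)) n *
        weightedSamples q v n₀ (fun t => jv v q (y * t)) n := by
  have hkernel : kkerC q v (q ^ n₀) z y = ((cqv q v ^ 2 : ℝ) : ℂ) * qIntC0 q (q ^ n₀)
      (fun t => ((t ^ (2 * v + 1) : ℝ) : ℂ) * (jv v q (z * t) * jv v q (y * t))) := by
    rw [kkerC]
    congr 2 with t
    rw [← Complex.ofReal_mul y t, jv_ofReal]
    push_cast
    ring
  rw [hkernel, qIntC0_rpow_mul hq0]
  push_cast
  ring

lemma zpow_mul_weightedSamples_jv (hq0 : 0 < q) (hq1 : q < 1) (hv : -1 < v) (n₀ k : ℤ) (n : ℕ) :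
    ((1 - q) * cqv q v * (q ^ (v + 1)) ^ k : ℝ) *
        weightedSamples q v n₀ (fun t => jv v q ((q ^ k : ℝ) * t)) n =
      besselSeq (q ^ 2) (q ^ (v + 1)) (k + (n₀ + n)) := by
  have hs0 : q ^ (v + 1) ≠ 0 := by positivity
  rw [weightedSamples, besselSeq_eq_zpow_mul_jvR hq0 hq1 hv, ← Complex.ofReal_mul, jv_ofReal,
    zpow_add₀ hq0.ne' k, zpow_add₀ hs0 k]
  push_cast
  ring

theorem zpow_mul_pwExt_zpow (hq0 : 0 < q) (hq1 : q < 1) (hv : -1 < v) (n₀ : ℤ) (u : ℝ → ℝ)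
    (k : ℤ) :
    ((q ^ (v + 1)) ^ k : ℝ) * pwExt q v (q ^ n₀) u (q ^ k : ℝ) =
      ∑' n, weightedSamples q v n₀ (fun t => u t) n *
        besselSeq (q ^ 2) (q ^ (v + 1)) (k + (n₀ + n)) := by
  simp only [pwExt_eq_tsum hq0, ← zpow_mul_weightedSamples_jv hq0 hq1 hv, ← tsum_mul_left]
  push_cast
  exact tsum_congr fun n => by ring

theorem zpow_mul_kkerC_zpow (hq0 : 0 < q) (hq1 : q < 1) (hv : -1 < v) (n₀ : ℤ) (z : ℂ) (k : ℤ) :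
    ((q ^ (v + 1)) ^ k : ℝ) * kkerC q v (q ^ n₀) z (q ^ k) =
      cqv q v * ∑' n, weightedSamples q v n₀ (fun t => jv v q (z * t)) n *
        besselSeq (q ^ 2) (q ^ (v + 1)) (k + (n₀ + n)) := by
  simp only [kkerC_eq_tsum hq0, ← zpow_mul_weightedSamples_jv hq0 hq1 hv, ← tsum_mul_left]
  push_cast
  exact tsum_congr fun n => by ring

end Sampling

end QSampling

/-- the q-sampling theorem: for `f ∈ PW_{q,a}^v`,
`f(z) = (1-q) ∑_{k∈ℤ} q^{2k(v+1)} f(qᵏ) k_z(qᵏ)` for all `z ∈ ℂ`. -/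
theorem q_sampling_theorem (q v : ℝ) (hq0 : 0 < q) (hq1 : q < 1) (hv : -1 < v)
    (n₀ : ℤ) (a : ℝ) (ha : a = (q : ℝ) ^ n₀)
    (u : ℝ → ℝ) (hu : memL2a q v a u) :
    ∀ z : ℂ, pwExt q v a u z =
      ((1 - q : ℝ) : ℂ) * ∑' k : ℤ,
        ((q ^ (2 * (k : ℝ) * (v + 1)) : ℝ) : ℂ) *
          pwExt q v a u (((q : ℝ) ^ k : ℝ) : ℂ) * kkerC q v a z ((q : ℝ) ^ k) := by
  intro z
  subst ha
  have hs := QSampling.abs_rpow_lt_one hq0 hq1 (show 0 < v + 1 by linarith)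
  have hinj : Function.Injective fun n : ℕ => n₀ + n :=
    (add_right_injective n₀).comp Nat.cast_injective
  rw [QSampling.pwExt_eq_tsum hq0,
    ← QSampling.tsum_tsum_mul_besselSeq_mul_tsum_mul_besselSeq
      (QSampling.abs_sq_lt_one hq0 hq1) hs hinj (QSampling.memℓp_weightedSamples_ofReal hq0 hu)
      (QSampling.memℓp_weightedSamples_jv hq0 hq1 hv n₀ z),
    ← tsum_mul_left, ← tsum_mul_left]
  refine tsum_congr fun k => ?_
  have hkernel := QSampling.zpow_mul_kkerC_zpow hq0 hq1 hv n₀ z k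
  rw [← QSampling.zpow_mul_pwExt_zpow hq0 hq1 hv, QSampling.rpow_two_mul_intCast_mul hq0]
  push_cast at hkernel ⊢
  linear_combination (-(1 - (q : ℂ)) * ((q ^ (v + 1) : ℝ) : ℂ) ^ k *
    pwExt q v (q ^ n₀) u ((q : ℂ) ^ k)) * hkernel
end
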